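/- arXiv:1804.01362 — 2 statements merged into one kernel-verified Lean document; each statement's English description precedes it below -/
import Mathlib

section
/- Let log J be an α-Hölder g-function with unique g-measure μ and entropy h_μ(σ). Fix x,y∈Ω and let a:Ω→ℝ be continuous. Let W* denote the set of all finite words over 𝒜, and let ((a_k,λ_k))_{k≥1} be an enumeration of the disjoint union of the families {(a(wx),𝕁(wx)) : w∈W*} and {(a(wy),𝕁(wx)) : w∈W*} such that (λ_k)_{k≥1} is nonincreasing. Then lim_{n→∞} (1/log n) Σ_{k=1}^n a_k λ_k = (2/h_μ(σ)) ∫_Ω a dμ. -/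
open Real MeasureTheory Filter Topology Set

open scoped Classical

namespace GS

/-- The full shift space `Ω = 𝒜^ℕ`. -/
abbrev Omega (𝒜 : Type) : Type := ℕ → 𝒜

variable {𝒜 : Type}

/-- The left shift `σ(x₁,x₂,…) = (x₂,x₃,…)`. -/
def shift (x : Omega 𝒜) : Omega 𝒜 := fun n => x (n + 1)

/-- Prepending a symbol: `qx = (q,x₁,x₂,…)`. -/
def cons (q : 𝒜) (x : Omega 𝒜) : Omega 𝒜 := fun n => Nat.casesOn n q x

/-- Concatenation `wx` of a finite word `w ∈ 𝒜^k` with `x ∈ Ω`. -/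
def concat {k : ℕ} (w : Fin k → 𝒜) (x : Omega 𝒜) : Omega 𝒜 :=
  fun n => if h : n < k then w ⟨n, h⟩ else x (n - k)

/-- The metric `d(x,y) = 2^{-N(x,y)}`, `N(x,y) = inf{k ≥ 1 : x_k ≠ y_k}`
(sequences are indexed from `0` in Lean, whence the `+ 1`). -/
noncomputable def dOmega (x y : Omega 𝒜) : ℝ :=
  if x = y then 0 else (1 / 2 : ℝ) ^ (sInf {k : ℕ | x k ≠ y k} + 1)

/-- `a : Ω → E` is `α`-Hölder (w.r.t. `dOmega`):
`Hol_α(a) = sup_{x≠y} ‖a x - a y‖ / d(x,y)^α < ∞`. -/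
def IsHolderW (α : ℝ) {E : Type*} [NormedAddCommGroup E] (a : Omega 𝒜 → E) : Prop :=
  ∃ C : ℝ, ∀ x y : Omega 𝒜, ‖a x - a y‖ ≤ C * (dOmega x y) ^ α

/-- The Hölder constant `Hol_α(a) = sup_{x≠y} ‖a x - a y‖ / d(x,y)^α`. -/
noncomputable def HolConst (α : ℝ) {E : Type*} [NormedAddCommGroup E] (a : Omega 𝒜 → E) : ℝ :=
  sSup {r : ℝ | ∃ x y : Omega 𝒜, x ≠ y ∧ r = ‖a x - a y‖ / (dOmega x y) ^ α}

/-- `J` is a `g`-function: continuous, strictly positive, with `∑_{q∈𝒜} J(qx) = 1`. -/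
def IsGFunction [Fintype 𝒜] [TopologicalSpace 𝒜] (J : Omega 𝒜 → ℝ) : Prop :=
  Continuous J ∧ (∀ x, 0 < J x) ∧ ∀ x : Omega 𝒜, ∑ q : 𝒜, J (cons q x) = 1

/-- The Ruelle transfer operator `(L_f φ)(x) = ∑_{q∈𝒜} e^{f(qx)} φ(qx)`. -/
noncomputable def ruelle [Fintype 𝒜] {E : Type*} [AddCommMonoid E] [Module ℝ E]
    (f : Omega 𝒜 → ℝ) (φ : Omega 𝒜 → E) : Omega 𝒜 → E :=
  fun x => ∑ q : 𝒜, Real.exp (f (cons q x)) • φ (cons q x)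

/-- Birkhoff sum `S_k(f) = ∑_{j=0}^{k-1} f ∘ σ^j`. -/
def birkhoff (f : Omega 𝒜 → ℝ) (k : ℕ) (x : Omega 𝒜) : ℝ :=
  ∑ j ∈ Finset.range k, f (shift^[j] x)

/-- `𝕁(wx) = exp (S_k(log J)(wx))` for a word `w` of length `k`. -/
noncomputable def JBirk (J : Omega 𝒜 → ℝ) (k : ℕ) (w : Fin k → 𝒜) (x : Omega 𝒜) : ℝ :=
  Real.exp (birkhoff (fun z => Real.log (J z)) k (concat w x))

/-- `ζ₊(s) = ∑_{k≥1} ∑_{w∈𝒜^k} a(wx) 𝕁(wx)^s`. -/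
noncomputable def zetaPlus [Fintype 𝒜] (J : Omega 𝒜 → ℝ) (a : Omega 𝒜 → ℂ) (x : Omega 𝒜)
    (s : ℝ) : ℂ :=
  ∑' k : ℕ, ∑ w : Fin (k + 1) → 𝒜, a (concat w x) * (((JBirk J (k + 1) w x) ^ s : ℝ) : ℂ)

/-- `ζ₋(s) = ∑_{k≥1} ∑_{w∈𝒜^k} a(wy) 𝕁(wx)^s`. -/
noncomputable def zetaMinus [Fintype 𝒜] (J : Omega 𝒜 → ℝ) (a : Omega 𝒜 → ℂ) (x y : Omega 𝒜)
    (s : ℝ) : ℂ :=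
  ∑' k : ℕ, ∑ w : Fin (k + 1) → 𝒜, a (concat w y) * (((JBirk J (k + 1) w x) ^ s : ℝ) : ℂ)

/-- `L_{log J}^* μ = μ`, i.e. `μ` is a `g`-measure of `J`, tested against continuous functions. -/
def IsGMeasure [Fintype 𝒜] [TopologicalSpace 𝒜] [MeasurableSpace 𝒜]
    (J : Omega 𝒜 → ℝ) (μ : Measure (Omega 𝒜)) : Prop :=
  IsProbabilityMeasure μ ∧
    ∀ φ : Omega 𝒜 → ℂ, Continuous φ →
      ∫ x, ruelle (fun z => Real.log (J z)) φ x ∂μ = ∫ x, φ x ∂μ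

/-- The cylinder set determined by a finite word. -/
def cyl {k : ℕ} (w : Fin k → 𝒜) : Set (Omega 𝒜) := {x | ∀ i : Fin k, x (i : ℕ) = w i}

/-- Entropy of the partition into cylinders of length `n`. -/
noncomputable def blockEntropy [Fintype 𝒜] [MeasurableSpace 𝒜] (μ : Measure (Omega 𝒜))
    (n : ℕ) : ℝ :=
  ∑ w : Fin n → 𝒜, Real.negMulLog (μ (cyl w)).toReal

/-- Kolmogorov–Sinai entropy `h_μ(σ)` of a shift-invariant measure, computed through the
generating partition into cylinders: `h_μ(σ) = lim_n H_n/n = inf_{n≥1} H_n/n`. -/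
noncomputable def KSentropy [Fintype 𝒜] [MeasurableSpace 𝒜] (μ : Measure (Omega 𝒜)) : ℝ :=
  ⨅ n : ℕ, blockEntropy μ (n + 1) / (n + 1)

/-- Topological pressure `P(f) = sup {h_μ(σ) + ∫ f dμ}` over shift-invariant Borel
probability measures. -/
noncomputable def pressure [Fintype 𝒜] [MeasurableSpace 𝒜] (f : Omega 𝒜 → ℝ) : ℝ :=
  sSup {r : ℝ | ∃ μ : Measure (Omega 𝒜), IsProbabilityMeasure μ ∧
    Measure.map shift μ = μ ∧ r = KSentropy μ + ∫ x, f x ∂μ}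

/-- `μ` is an equilibrium state of `f`. -/
def IsEquilibrium [Fintype 𝒜] [MeasurableSpace 𝒜] (f : Omega 𝒜 → ℝ)
    (μ : Measure (Omega 𝒜)) : Prop :=
  IsProbabilityMeasure μ ∧ Measure.map shift μ = μ ∧
    KSentropy μ + ∫ x, f x ∂μ = pressure f

/-- The Walters class `W(Ω,σ)`:
`sup_{n≥1} sup_{w∈𝒜^n} |S_n(f)(wx) − S_n(f)(wy)| → 0` as `d(x,y) → 0`. -/
def WaltersClass [TopologicalSpace 𝒜] (f : Omega 𝒜 → ℝ) : Prop :=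
  Continuous f ∧ ∀ ε > (0:ℝ), ∃ δ > (0:ℝ), ∀ x y : Omega 𝒜, dOmega x y < δ →
    ∀ (n : ℕ) (w : Fin n → 𝒜),
      |birkhoff f n (concat w x) - birkhoff f n (concat w y)| ≤ ε

/-- The set `W*` of finite (nonempty) words over `𝒜`. -/
def Words (𝒜 : Type) : Type := Σ k : ℕ, Fin (k + 1) → 𝒜

end GS
namespace GS

variable {𝒜 : Type}

/-- The value `a_k`: `a(wx)` on the first copy of `W*`, `a(wy)` on the second. -/
def wordVal (a : Omega 𝒜 → ℝ) (x y : Omega 𝒜) : Words 𝒜 ⊕ Words 𝒜 → ℝ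
  | Sum.inl w => a (concat w.2 x)
  | Sum.inr w => a (concat w.2 y)

/-- The eigenvalue `λ_k = 𝕁(wx)` (on both copies of `W*`). -/
noncomputable def wordLam (J : Omega 𝒜 → ℝ) (x : Omega 𝒜) : Words 𝒜 ⊕ Words 𝒜 → ℝ
  | Sum.inl w => JBirk J (w.1 + 1) w.2 x
  | Sum.inr w => JBirk J (w.1 + 1) w.2 x

end GS

namespace GS

section abstractPart

/-- Mass of the atypical words. -/
noncomputable def badMass {W : ℕ → Type} [∀ k, Fintype (W k)] (p : ∀ k, W k → ℝ) (h δ : ℝ)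
    (k : ℕ) : ℝ :=
  ∑ w : W k, if |Real.log (p k w) + (k + 1) * h| ≤ (k + 1) * δ then 0 else p k w

variable {W : ℕ → Type} [∀ k, Fintype (W k)] (p : ∀ k, W k → ℝ)

lemma key_bound (hp : ∀ k w, 0 < p k w) (h1 : ∀ k, ∑ w, p k w = 1)
    (κ : ℝ) (hκ : 0 < κ) (hdec : ∀ k w, Real.log (p k w) ≤ -κ * (k + 1))
    (h : ℝ) (hh : 0 < h) (η : ℝ) (hη : 0 < η) (hη2 : η ≤ 1 / 2)
    (b : ∀ k, W k → ℝ) (B : ℝ) (hB : ∀ k w, |b k w| ≤ B) (hB0 : 0 ≤ B) (T : ℝ) (hT : 0 < T)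
    (G : Finset (Σ k, W k))
    (hG1 : ∀ v : Σ k, W k, Real.exp (-T) < p v.1 v.2 → v ∈ G)
    (hG2 : ∀ v ∈ G, Real.exp (-T) ≤ p v.1 v.2) :
    |∑ v ∈ G, b v.1 v.2 * p v.1 v.2 -
      ∑ k ∈ Finset.range ⌊((1 - η) / h) * T⌋₊, ∑ w, b k w * p k w| ≤
    B * (∑ k ∈ Finset.range ⌈(1 / κ + 2 / h) * T⌉₊, badMass p h (η * h) k
      + (⌈((1 + 2 * η) / h) * T⌉₊ - ⌊((1 - η) / h) * T⌋₊ : ℝ)) := by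
  set N1 := ⌊((1 - η) / h) * T⌋₊ with hN1
  set N2 := ⌈((1 + 2 * η) / h) * T⌉₊ with hN2
  set M := ⌈(1 / κ + 2 / h) * T⌉₊ with hM
  have hN12 : N1 ≤ N2 := by
    apply Nat.floor_le_of_le
    refine le_trans ?_ (Nat.le_ceil _)
    apply mul_le_mul_of_nonneg_right _ hT.le
    apply div_le_div_of_nonneg_right _ hh.le
    linarith
  have hN2M : N2 ≤ M := by
    apply Nat.ceil_mono
    apply mul_le_mul_of_nonneg_right _ hT.le
    have : (1 + 2 * η) / h ≤ 2 / h := div_le_div_of_nonneg_right (by linarith) hh.le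
    have : 0 < 1 / κ := by positivity
    linarith
  have hlen : ∀ v ∈ G, v.1 < M := by
    intro v hv
    have h1 := hG2 v hv
    have h2 := hdec v.1 v.2
    have h3 : -T ≤ Real.log (p v.1 v.2) := by
      rw [Real.le_log_iff_exp_le (hp _ _)]; exact h1
    have h4 : ((v.1 : ℝ) + 1) ≤ (1 / κ + 2 / h) * T := by
      have : (v.1 + 1 : ℝ) ≤ 1 / κ * T := by
        rw [div_mul_eq_mul_div, le_div_iff₀ hκ]; linarith
      have : 0 < 2 / h * T := by positivity
      linarith
    have h5 : ((v.1 : ℝ) + 1) ≤ M := h4.trans (Nat.le_ceil _)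
    exact_mod_cast h5
  have hsum : ∑ v ∈ G, b v.1 v.2 * p v.1 v.2 =
      ∑ k ∈ Finset.range M, ∑ w : W k, if (⟨k, w⟩ : Σ k, W k) ∈ G then b k w * p k w else 0 := by
    rw [← Finset.sum_sigma' (Finset.range M) (fun k => (Finset.univ : Finset (W k)))
      (fun k w => if (⟨k, w⟩ : Σ k, W k) ∈ G then b k w * p k w else 0) |>.symm]
    rw [← Finset.sum_filter]
    apply Finset.sum_congr _ (fun _ _ => rfl)
    ext v
    simp only [Finset.mem_filter, Finset.mem_sigma, Finset.mem_range, Finset.mem_univ, and_true]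
    exact ⟨fun hv => ⟨hlen v hv, hv⟩, fun hv => hv.2⟩
  have hsum2 : ∑ k ∈ Finset.range N1, ∑ w, b k w * p k w =
      ∑ k ∈ Finset.range M, if k < N1 then ∑ w, b k w * p k w else 0 := by
    rw [← Finset.sum_filter]
    apply Finset.sum_congr _ (fun _ _ => rfl)
    ext k; simp; omega
  have hsum3 : (N2 - N1 : ℝ) = ∑ k ∈ Finset.range M, if N1 ≤ k ∧ k < N2 then (1:ℝ) else 0 := by
    rw [← Finset.sum_filter]
    have : (Finset.range M).filter (fun k => N1 ≤ k ∧ k < N2) = Finset.Ico N1 N2 := by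
      ext k; simp; omega
    rw [this]; simp [Nat.cast_sub hN12]
  rw [hsum, hsum2, hsum3, ← Finset.sum_sub_distrib, ← Finset.sum_add_distrib, Finset.mul_sum]
  refine (Finset.abs_sum_le_sum_abs _ _).trans (Finset.sum_le_sum fun k _ => ?_)
  have hbp : ∀ w, |b k w * p k w| ≤ B * p k w := by
    intro w
    rw [abs_mul, abs_of_pos (hp k w)]
    exact mul_le_mul_of_nonneg_right (hB k w) (hp k w).le
  have hbad0 : 0 ≤ badMass p h (η * h) k := by
    apply Finset.sum_nonneg; intro w _; split_ifs; exact le_rfl; exact (hp k w).le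
  by_cases hk1 : k < N1
  · -- all typical words are in `G`
    have hng : ¬ (N1 ≤ k ∧ k < N2) := by omega
    rw [if_pos hk1, if_neg hng, add_zero, ← Finset.sum_sub_distrib, badMass, Finset.mul_sum]
    refine (Finset.abs_sum_le_sum_abs _ _).trans (Finset.sum_le_sum fun w _ => ?_)
    by_cases hw : (⟨k, w⟩ : Σ k, W k) ∈ G
    · simp only [hw, if_true, sub_self, abs_zero]
      split_ifs
      · simp
      · exact mul_nonneg hB0 (hp k w).le
    · have : ¬ (|Real.log (p k w) + (k + 1) * h| ≤ (k + 1) * (η * h)) := by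
        intro hgood
        apply hw
        apply hG1
        show Real.exp (-T) < p k w
        rw [← Real.lt_log_iff_exp_lt (hp k w)]
        have h3 := (abs_le.1 hgood).1
        have h4 : ((k : ℝ) + 1) ≤ (1 - η) / h * T := by
          have : ((k + 1 : ℕ) : ℝ) ≤ N1 := by exact_mod_cast hk1
          push_cast at this
          refine this.trans (Nat.floor_le ?_)
          have : 0 ≤ 1 - η := by linarith
          positivity
        have h5 : ((k : ℝ) + 1) * h ≤ (1 - η) * T := by
          rw [div_mul_eq_mul_div, le_div_iff₀ hh] at h4; exact h4
        nlinarith [mul_pos (mul_pos hη hη) hT]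
      simp only [hw, if_false, this, zero_sub, abs_neg]
      exact hbp w
  · rw [if_neg hk1, sub_zero]
    by_cases hk2 : k < N2
    · rw [if_pos ⟨by omega, hk2⟩]
      have : |∑ w : W k, if (⟨k, w⟩ : Σ k, W k) ∈ G then b k w * p k w else 0| ≤ B * 1 := by
        rw [← h1 k, Finset.mul_sum]
        refine (Finset.abs_sum_le_sum_abs _ _).trans (Finset.sum_le_sum fun w _ => ?_)
        split_ifs
        · exact hbp w
        · simpa using mul_nonneg hB0 (hp k w).le
      refine this.trans (mul_le_mul_of_nonneg_left (by linarith) hB0)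
    · have hng : ¬ (N1 ≤ k ∧ k < N2) := by omega
      rw [if_neg hng, add_zero, badMass, Finset.mul_sum]
      refine (Finset.abs_sum_le_sum_abs _ _).trans (Finset.sum_le_sum fun w _ => ?_)
      by_cases hw : (⟨k, w⟩ : Σ k, W k) ∈ G
      · have : ¬ (|Real.log (p k w) + (k + 1) * h| ≤ (k + 1) * (η * h)) := by
          intro hgood
          have h2 := hG2 _ hw
          have h3 : -T ≤ Real.log (p k w) := by
            rw [Real.le_log_iff_exp_le (hp _ _)]; exact h2
          have h3' := (abs_le.1 hgood).2
          have h4 : (1 + 2 * η) / h * T < (k : ℝ) + 1 := by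
            have : (N2 : ℝ) ≤ k := by exact_mod_cast (not_lt.1 hk2)
            have := (Nat.le_ceil ((1 + 2 * η) / h * T)).trans this
            linarith
          have h5 : (1 + 2 * η) * T < ((k : ℝ) + 1) * h := by
            rw [div_mul_eq_mul_div, div_lt_iff₀ hh] at h4; exact h4
          nlinarith [mul_pos hη hT, mul_nonneg (mul_nonneg hη.le hT.le) (by linarith : 0 ≤ 1 - 2 * η), mul_lt_mul_of_pos_right h5 (by linarith : 0 < 1 - η)]
        simp only [hw, if_true, this, if_false]
        exact hbp w
      · simp only [hw, if_false, abs_zero]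
        split_ifs
        · simp
        · exact mul_nonneg hB0 (hp k w).le

lemma cesaro_comp {u : ℕ → ℝ} {l : ℝ} (hu : Tendsto u atTop (𝓝 l)) (N : ℝ → ℕ) (c : ℝ)
    (hN : Tendsto N atTop atTop) (hNT : Tendsto (fun T => (N T : ℝ) / T) atTop (𝓝 c)) :
    Tendsto (fun T => (∑ k ∈ Finset.range (N T), u k) / T) atTop (𝓝 (l * c)) := by
  have h1 := (hu.cesaro.comp hN).mul hNT
  refine h1.congr' ?_
  filter_upwards [hN.eventually_ge_atTop 1] with T hT
  have : (N T : ℝ) ≠ 0 := by positivity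
  simp only [Function.comp]
  field_simp

lemma tendsto_floor_mul {c : ℝ} (hc : 0 < c) : Tendsto (fun T : ℝ => ⌊c * T⌋₊) atTop atTop :=
  tendsto_nat_floor_atTop.comp (tendsto_id.const_mul_atTop hc)

lemma tendsto_ceil_mul {c : ℝ} (hc : 0 < c) : Tendsto (fun T : ℝ => ⌈c * T⌉₊) atTop atTop :=
  tendsto_nat_ceil_atTop.comp (tendsto_id.const_mul_atTop hc)

lemma key (hp : ∀ k w, 0 < p k w) (h1 : ∀ k, ∑ w, p k w = 1)
    (κ : ℝ) (hκ : 0 < κ) (hdec : ∀ k w, Real.log (p k w) ≤ -κ * (k + 1))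
    (h : ℝ) (hh : 0 < h)
    (hlln : ∀ δ > 0, Tendsto (badMass p h δ) atTop (𝓝 0))
    (b : ∀ k, W k → ℝ) (B : ℝ) (hB : ∀ k w, |b k w| ≤ B) (hB0 : 0 ≤ B) (I : ℝ)
    (hm : Tendsto (fun k => ∑ w, b k w * p k w) atTop (𝓝 I)) :
    ∀ ε > 0, ∀ᶠ T in atTop, ∀ G : Finset (Σ k, W k),
    (∀ v : Σ k, W k, Real.exp (-T) < p v.1 v.2 → v ∈ G) →
    (∀ v ∈ G, Real.exp (-T) ≤ p v.1 v.2) →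
    |∑ v ∈ G, b v.1 v.2 * p v.1 v.2 - T * (I / h)| ≤ ε * T := by
  intro ε hε
  obtain ⟨η, hη, hη2, hηε⟩ : ∃ η : ℝ, 0 < η ∧ η ≤ 1 / 2 ∧ η * (|I| / h + B * (3 / h)) < ε := by
    have hpos : 0 < |I| / h + B * (3 / h) + 1 := by positivity
    refine ⟨min (1 / 2) (ε / (|I| / h + B * (3 / h) + 1)), ?_, min_le_left _ _, ?_⟩
    · apply lt_min; norm_num; positivity
    · have hx : 0 ≤ |I| / h + B * (3 / h) := by positivity
      calc _ ≤ (ε / (|I| / h + B * (3 / h) + 1)) * (|I| / h + B * (3 / h)) :=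
            mul_le_mul_of_nonneg_right (min_le_right _ _) hx
        _ < ε := by
            rw [div_mul_eq_mul_div, div_lt_iff₀ hpos]
            nlinarith
  have hc1 : 0 < (1 - η) / h := div_pos (by linarith) hh
  have hc2 : 0 < (1 + 2 * η) / h := div_pos (by linarith) hh
  have hc3 : 0 < 1 / κ + 2 / h := by positivity
  have hf1 := tendsto_nat_floor_mul_div_atTop (R := ℝ) hc1.le
  have hf2 := tendsto_nat_ceil_mul_div_atTop (R := ℝ) hc2.le
  have hf3 := tendsto_nat_ceil_mul_div_atTop (R := ℝ) hc3.le
  have l1 := cesaro_comp hm _ _ (tendsto_floor_mul hc1) hf1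
  have l2 := cesaro_comp (hlln (η * h) (by positivity)) _ _ (tendsto_ceil_mul hc3) hf3
  have l3 := (((l1.sub_const (I / h)).abs).add ((l2.add (hf2.sub hf1)).const_mul B))
  have hlim : |I * ((1 - η) / h) - I / h| + B * (0 * (1 / κ + 2 / h) +
      ((1 + 2 * η) / h - (1 - η) / h)) < ε := by
    have e1 : I * ((1 - η) / h) - I / h = -(η * (I / h)) := by field_simp; ring
    have e2 : (1 + 2 * η) / h - (1 - η) / h = η * (3 / h) := by field_simp; ring
    rw [e1, e2, abs_neg, abs_mul, abs_div, abs_of_pos hη, abs_of_pos hh]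
    linarith
  filter_upwards [l3.eventually_lt_const hlim, eventually_gt_atTop 0] with T hT hT0 G hG1 hG2
  have kb := key_bound p hp h1 κ hκ hdec h hh η hη hη2 b B hB hB0 T hT0 G hG1 hG2
  set S1 := ∑ k ∈ Finset.range ⌊((1 - η) / h) * T⌋₊, ∑ w, b k w * p k w with hS1
  set S2 := ∑ k ∈ Finset.range ⌈(1 / κ + 2 / h) * T⌉₊, badMass p h (η * h) k with hS2
  set N1 := (⌊((1 - η) / h) * T⌋₊ : ℝ)
  set N2 := (⌈((1 + 2 * η) / h) * T⌉₊ : ℝ)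
  have e3 : |S1 / T - I / h| * T = |S1 - T * (I / h)| := by
    rw [← abs_of_pos hT0, ← abs_mul, abs_of_pos hT0]
    congr 1; field_simp
  have e4 : B * (S2 / T + (N2 / T - N1 / T)) * T = B * (S2 + (N2 - N1)) := by
    field_simp
  have := mul_lt_mul_of_pos_right hT hT0
  rw [add_mul, e3, e4] at this
  have tri := abs_sub_le (∑ v ∈ G, b v.1 v.2 * p v.1 v.2) S1 (T * (I / h))
  linarith

lemma key_card (hp : ∀ k w, 0 < p k w) (h1 : ∀ k, ∑ w, p k w = 1)
    (κ : ℝ) (hκ : 0 < κ) (hdec : ∀ k w, Real.log (p k w) ≤ -κ * (k + 1))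
    (h : ℝ) (hh : 0 < h)
    (hlln : ∀ δ > 0, Tendsto (badMass p h δ) atTop (𝓝 0)) :
    ∀ ε > 0, ∀ᶠ T in atTop, ∀ G : Finset (Σ k, W k),
    (∀ v : Σ k, W k, Real.exp (-T) < p v.1 v.2 → v ∈ G) →
    (∀ v ∈ G, Real.exp (-T) ≤ p v.1 v.2) →
    (G.card : ℝ) ≤ Real.exp ((1 + ε) * T) ∧ Real.exp ((1 - ε) * T) ≤ G.card := by
  intro ε hε
  have hk := key p hp h1 κ hκ hdec h hh hlln (fun _ _ => 1) 1 (by simp) zero_le_one 1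
    (by simp [h1]) 1 one_pos
  -- upper bound
  have hup : ∀ᶠ T in atTop, (1 / h + 1) * T ≤ Real.exp (ε * T) := by
    have : Tendsto (fun T : ℝ => Real.exp (ε * T) / (ε * T)) atTop atTop := by
      have := (Real.tendsto_exp_div_pow_atTop 1).comp (tendsto_id.const_mul_atTop hε)
      simpa [Function.comp_def] using this
    filter_upwards [this.eventually_ge_atTop ((1 / h + 1) / ε), eventually_gt_atTop 0] with T hT hT0
    rw [div_le_div_iff₀ hε (by positivity)] at hT
    have : ((1 / h + 1) * T) * ε ≤ Real.exp (ε * T) * ε := by linarith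
    exact le_of_mul_le_mul_right this hε
  -- lower bound
  obtain ⟨η, hη, hη2, hηε⟩ : ∃ η : ℝ, 0 < η ∧ η ≤ 1 / 2 ∧ 4 * η ≤ ε :=
    ⟨min (1 / 2) (ε / 4), by positivity, min_le_left _ _, by
      have := min_le_right (1/2) (ε / 4); linarith⟩
  have hc1 : 0 < (1 - η) / h := div_pos (by linarith) hh
  have hbad : ∀ᶠ T : ℝ in atTop, badMass p h (η * h) ⌊((1 - η) / h) * T - 1⌋₊ < 1 / 2 := by
    have : Tendsto (fun T : ℝ => ⌊((1 - η) / h) * T - 1⌋₊) atTop atTop :=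
      tendsto_nat_floor_atTop.comp
        (tendsto_atTop_add_const_right _ (-1) (tendsto_id.const_mul_atTop hc1))
    exact ((hlln (η * h) (by positivity)).comp this).eventually_lt_const (by norm_num)
  have hbig : ∀ᶠ T : ℝ in atTop, 1 + 2 * (h + 1) ≤ η * T ∧ 1 ≤ ((1 - η) / h) * T :=
    ((tendsto_id.const_mul_atTop hη).eventually_ge_atTop _).and
     ((tendsto_id.const_mul_atTop hc1).eventually_ge_atTop _)
  filter_upwards [hk, hup, hbad, hbig, eventually_gt_atTop 0] with T hkT hupT hbadT hbigT hT0 G hG1 hG2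
  constructor
  · have h2 := (abs_le.1 (hkT G hG1 hG2)).2
    simp only [one_mul] at h2
    have h3 : (G.card : ℝ) * Real.exp (-T) ≤ ∑ v ∈ G, p v.1 v.2 := by
      rw [← nsmul_eq_mul]; exact Finset.card_nsmul_le_sum _ _ _ hG2
    have h4 : (G.card : ℝ) * Real.exp (-T) ≤ Real.exp (ε * T) := by
      refine h3.trans (le_trans ?_ hupT); linarith
    have : (1 + ε) * T = ε * T + T := by ring
    rw [this, Real.exp_add]
    rw [Real.exp_neg, ← div_eq_mul_inv, div_le_iff₀ (Real.exp_pos _)] at h4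
    exact h4
  · set k := ⌊((1 - η) / h) * T - 1⌋₊ with hkdef
    have hk1 : ((k : ℝ) + 1) * h ≤ (1 - η) * T := by
      have := Nat.floor_le (show 0 ≤ ((1 - η) / h) * T - 1 by linarith [hbigT.2])
      have h4 : (k : ℝ) + 1 ≤ (1 - η) / h * T := by linarith
      rw [div_mul_eq_mul_div, le_div_iff₀ hh] at h4; exact h4
    have hk2 : (1 - η) * T - h ≤ ((k : ℝ) + 1) * h := by
      have := Nat.lt_floor_add_one (((1 - η) / h) * T - 1)
      have h4 : (1 - η) / h * T ≤ (k : ℝ) + 1 + 1 := by linarith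
      rw [div_mul_eq_mul_div, div_le_iff₀ hh] at h4; linarith
    let good : W k → Prop := fun w => |Real.log (p k w) + (k + 1) * h| ≤ (k + 1) * (η * h)
    have hgoodmass : 1 / 2 ≤ ∑ w : W k with good w, p k w := by
      have e1 : ∑ w : W k with good w, p k w + badMass p h (η * h) k = 1 := by
        rw [badMass, Finset.sum_filter, ← Finset.sum_add_distrib]
        refine Eq.trans ?_ (h1 k)
        apply Finset.sum_congr rfl
        intro w _
        by_cases hg : good w
        · have hg' := hg
          simp only [good] at hg'
          simp [hg, hg']
        · have hg' := hg
          simp only [good] at hg'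
          simp [hg, hg']
      linarith
    have hle : ∑ w : W k with good w, p k w ≤
        ((Finset.univ.filter good).card : ℝ) * Real.exp (-((k + 1) * h * (1 - η))) := by
      rw [← nsmul_eq_mul]
      apply Finset.sum_le_card_nsmul
      intro w hw
      have hw := (Finset.mem_filter.1 hw).2
      have := (abs_le.1 hw).2
      rw [← Real.log_le_iff_le_exp (hp k w)]
      linarith
    have hcard : (Finset.univ.filter good).card ≤ G.card := by
      apply Finset.card_le_card_of_injOn (fun w => (⟨k, w⟩ : Σ k, W k))
      · intro w hw
        have hw := (Finset.mem_filter.1 (Finset.mem_coe.1 hw)).2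
        apply hG1
        show Real.exp (-T) < p k w
        rw [← Real.lt_log_iff_exp_lt (hp k w)]
        have h3 := (abs_le.1 hw).1
        nlinarith [mul_pos (mul_pos hη hη) hT0]
      · intro w _ w' _ hww
        simpa using hww
    have hcard' : ((Finset.univ.filter good).card : ℝ) ≤ G.card := by exact_mod_cast hcard
    have h6 : 1 / 2 ≤ (G.card : ℝ) * Real.exp (-((k + 1) * h * (1 - η))) :=
      hgoodmass.trans (hle.trans (mul_le_mul_of_nonneg_right hcard' (Real.exp_pos _).le))
    have h7 : Real.exp ((k + 1) * h * (1 - η)) ≤ 2 * G.card := by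
      rw [Real.exp_neg, ← div_eq_mul_inv, le_div_iff₀ (Real.exp_pos _)] at h6
      linarith
    have h8 : (1 - ε) * T + 1 ≤ (k + 1) * h * (1 - η) := by
      have : ((1 - η) * T - h) * (1 - η) ≤ (k + 1) * h * (1 - η) :=
        mul_le_mul_of_nonneg_right hk2 (by linarith)
      nlinarith [mul_pos hη hT0, mul_pos (mul_pos hη hη) hT0, hbigT.1, mul_pos hη hh,
        mul_le_mul_of_nonneg_right hηε hT0.le]
    have h9 : Real.exp ((1 - ε) * T) * 2 ≤ Real.exp ((1 - ε) * T + 1) := by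
      rw [Real.exp_add]
      apply mul_le_mul_of_nonneg_left _ (Real.exp_pos _).le
      have := Real.add_one_le_exp (1:ℝ); linarith
    have := Real.exp_le_exp.2 h8
    linarith

end abstractPart
end GS
namespace GS

variable {𝒜 : Type}

/-! ### The normalized transfer operator -/

/-- The transfer operator `L φ (x) = ∑_q J(qx) φ(qx)` on real functions. -/
noncomputable def LL [Fintype 𝒜] (J : Omega 𝒜 → ℝ) (φ : Omega 𝒜 → ℝ) : Omega 𝒜 → ℝ :=
  fun x => ∑ q : 𝒜, J (cons q x) * φ (cons q x)

lemma shift_cons (q : 𝒜) (x : Omega 𝒜) : shift (cons q x) = x := by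
  funext n; rfl

lemma concat_zero (w : Fin 0 → 𝒜) (x : Omega 𝒜) : concat w x = x := by
  funext n; simp [concat]

lemma concat_cons {k : ℕ} (q : 𝒜) (w : Fin k → 𝒜) (x : Omega 𝒜) :
    concat (Fin.cons q w : Fin (k + 1) → 𝒜) x = cons q (concat w x) := by
  funext n
  cases n with
  | zero => simp [concat, cons]
  | succ n =>
    simp only [concat, cons]
    by_cases h : n < k
    · rw [dif_pos (by omega), dif_pos h]
      exact Fin.cons_succ (α := fun _ => 𝒜) q w ⟨n, h⟩
    · rw [dif_neg (by omega), dif_neg h]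
      congr 1; omega

lemma birkhoff_succ' (f : Omega 𝒜 → ℝ) (k : ℕ) (z : Omega 𝒜) :
    birkhoff f (k + 1) z = f z + birkhoff f k (shift z) := by
  simp only [birkhoff, Finset.sum_range_succ', Function.iterate_succ_apply, Function.iterate_zero,
    id]
  ring

lemma birkhoff_succ (f : Omega 𝒜 → ℝ) (k : ℕ) (z : Omega 𝒜) :
    birkhoff f (k + 1) z = birkhoff f k z + f (shift^[k] z) := by
  simp only [birkhoff, Finset.sum_range_succ]

lemma JBirk_pos (J : Omega 𝒜 → ℝ) (k : ℕ) (w : Fin k → 𝒜) (x : Omega 𝒜) : 0 < JBirk J k w x :=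
  Real.exp_pos _

lemma JBirk_cons {J : Omega 𝒜 → ℝ} (hJ : ∀ x, 0 < J x) (k : ℕ) (q : 𝒜) (w : Fin k → 𝒜)
    (x : Omega 𝒜) : JBirk J (k + 1) (Fin.cons q w : Fin (k + 1) → 𝒜) x =
      J (cons q (concat w x)) * JBirk J k w x := by
  unfold JBirk
  rw [concat_cons, birkhoff_succ', shift_cons, Real.exp_add, Real.exp_log (hJ _)]

section ops
variable [Fintype 𝒜] {J : Omega 𝒜 → ℝ}

lemma sum_words_succ {k : ℕ} (F : (Fin (k + 1) → 𝒜) → ℝ) :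
    ∑ w, F w = ∑ w : Fin k → 𝒜, ∑ q : 𝒜, F (Fin.cons q w : Fin (k + 1) → 𝒜) := by
  rw [← (Fin.consEquiv (fun _ : Fin (k + 1) => 𝒜)).sum_comp, Fintype.sum_prod_type_right]
  rfl

lemma LL_iter (hJ : ∀ x, 0 < J x) (k : ℕ) : ∀ (φ : Omega 𝒜 → ℝ) (x : Omega 𝒜),
    (LL J)^[k] φ x = ∑ w : Fin k → 𝒜, JBirk J k w x * φ (concat w x) := by
  induction k with
  | zero => intro φ x; simp [JBirk, birkhoff, concat_zero]
  | succ k ih =>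
    intro φ x
    rw [Function.iterate_succ_apply, ih, sum_words_succ]
    apply Finset.sum_congr rfl
    intro w _
    rw [LL, Finset.mul_sum]
    apply Finset.sum_congr rfl
    intro q _
    rw [JBirk_cons hJ, concat_cons]; ring

lemma LL_const (h1 : ∀ x : Omega 𝒜, ∑ q : 𝒜, J (cons q x) = 1) (c : ℝ) :
    LL J (fun _ => c) = fun _ => c := by
  funext x; simp [LL, ← Finset.sum_mul, h1]

lemma LL_iter_const (h1 : ∀ x : Omega 𝒜, ∑ q : 𝒜, J (cons q x) = 1) (c : ℝ) (k : ℕ) :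
    (LL J)^[k] (fun _ => c) = fun _ => c := by
  induction k with
  | zero => rfl
  | succ k ih => rw [Function.iterate_succ_apply, LL_const h1, ih]

lemma sum_JBirk (hJ : ∀ x, 0 < J x) (h1 : ∀ x : Omega 𝒜, ∑ q : 𝒜, J (cons q x) = 1) (k : ℕ)
    (x : Omega 𝒜) : ∑ w : Fin k → 𝒜, JBirk J k w x = 1 := by
  have := LL_iter hJ k (fun _ => 1) x
  rw [LL_iter_const h1] at this
  simpa using this.symm

lemma LL_le (hJ : ∀ x, 0 < J x) (h1 : ∀ x : Omega 𝒜, ∑ q : 𝒜, J (cons q x) = 1)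
    {φ : Omega 𝒜 → ℝ} {c : ℝ} (h : ∀ x, |φ x| ≤ c) (x : Omega 𝒜) : |LL J φ x| ≤ c := by
  have : c = ∑ q : 𝒜, J (cons q x) * c := by rw [← Finset.sum_mul, h1, one_mul]
  rw [this, LL]
  refine (Finset.abs_sum_le_sum_abs _ _).trans (Finset.sum_le_sum fun q _ => ?_)
  rw [abs_mul, abs_of_pos (hJ _)]
  exact mul_le_mul_of_nonneg_left (h _) (hJ _).le

lemma LL_iter_le (hJ : ∀ x, 0 < J x) (h1 : ∀ x : Omega 𝒜, ∑ q : 𝒜, J (cons q x) = 1)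
    (k : ℕ) {φ : Omega 𝒜 → ℝ} {c : ℝ} (h : ∀ x, |φ x| ≤ c) (x : Omega 𝒜) :
    |(LL J)^[k] φ x| ≤ c := by
  induction k generalizing x with
  | zero => exact h x
  | succ k ih => rw [Function.iterate_succ_apply']; exact LL_le hJ h1 ih x

lemma LL_add (φ ψ : Omega 𝒜 → ℝ) : LL J (fun x => φ x + ψ x) = fun x => LL J φ x + LL J ψ x := by
  funext x; simp [LL, mul_add, Finset.sum_add_distrib]

lemma LL_iter_add (k : ℕ) (φ ψ : Omega 𝒜 → ℝ) : (LL J)^[k] (fun x => φ x + ψ x) =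
    fun x => (LL J)^[k] φ x + (LL J)^[k] ψ x := by
  induction k generalizing φ ψ with
  | zero => rfl
  | succ k ih => simp only [Function.iterate_succ_apply, LL_add, ih]

/-- `L^k (φ · g∘σ^k) = g · L^k φ` -/
lemma LL_iter_mul_comp (k : ℕ) (φ g : Omega 𝒜 → ℝ) :
    (LL J)^[k] (fun x => φ x * g (shift^[k] x)) = fun x => (LL J)^[k] φ x * g x := by
  induction k generalizing φ with
  | zero => rfl
  | succ k ih =>
    rw [Function.iterate_succ_apply, Function.iterate_succ_apply]
    rw [← ih]
    congr 1
    funext x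
    simp only [LL, Function.iterate_succ_apply, shift_cons, Finset.sum_mul, mul_assoc]

end ops

section lln
variable [Fintype 𝒜] {J : Omega 𝒜 → ℝ}

lemma cross_bound (hJ : ∀ x, 0 < J x) (h1 : ∀ x : Omega 𝒜, ∑ q : 𝒜, J (cons q x) = 1)
    (f g : Omega 𝒜 → ℝ) (c : ℝ) (hf : ∀ x, |f x| ≤ c) (s : ℕ → ℝ)
    (hs : ∀ j x, |(LL J)^[j] g x| ≤ s j) (k : ℕ) (x : Omega 𝒜) :
    |(LL J)^[k] (fun z => g z * birkhoff f k z) x| ≤ c * ∑ j ∈ Finset.range k, s j := by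
  induction k generalizing x with
  | zero => simp [birkhoff]
  | succ k ih =>
    have e : (fun z => g z * birkhoff f (k + 1) z) =
        fun z => g z * birkhoff f k z + g z * f (shift^[k] z) := by
      funext z; rw [birkhoff_succ]; ring
    rw [e, LL_iter_add, Finset.sum_range_succ, mul_add]
    refine (abs_add_le _ _).trans (add_le_add ?_ ?_)
    · rw [Function.iterate_succ_apply']
      exact LL_le hJ h1 ih x
    · rw [Function.iterate_succ_apply', LL_iter_mul_comp]
      apply LL_le hJ h1
      intro z
      rw [abs_mul, mul_comm]
      exact mul_le_mul (hf z) (hs k z) (abs_nonneg _) ((abs_nonneg _).trans (hf z))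

lemma var_bound (hJ : ∀ x, 0 < J x) (h1 : ∀ x : Omega 𝒜, ∑ q : 𝒜, J (cons q x) = 1)
    (f : Omega 𝒜 → ℝ) (c : ℝ) (hf : ∀ x, |f x| ≤ c) (s : ℕ → ℝ)
    (hs : ∀ j x, |(LL J)^[j] f x| ≤ s j) (k : ℕ) (x : Omega 𝒜) :
    |(LL J)^[k] (fun z => (birkhoff f k z) ^ 2) x| ≤
      k * (c ^ 2 + 2 * (c * ∑ j ∈ Finset.range k, s (j + 1))) := by
  have hc0 : 0 ≤ c := (abs_nonneg _).trans (hf x)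
  have hs0 : ∀ j, 0 ≤ s j := fun j => (abs_nonneg _).trans (hs j x)
  induction k generalizing x with
  | zero => simp [birkhoff]
  | succ k ih =>
    have e : LL J (fun z => (birkhoff f (k + 1) z) ^ 2) =
        fun z => LL J (fun z => f z ^ 2) z +
          ((LL J f z * birkhoff f k z + LL J f z * birkhoff f k z) + (birkhoff f k z) ^ 2) := by
      funext z
      simp only [LL, birkhoff_succ', shift_cons]
      have : birkhoff f k z ^ 2 = ∑ q : 𝒜, J (cons q z) * birkhoff f k z ^ 2 := by
        rw [← Finset.sum_mul, h1, one_mul]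
      rw [this, Finset.sum_mul, ← Finset.sum_add_distrib, ← Finset.sum_add_distrib,
        ← Finset.sum_add_distrib]
      apply Finset.sum_congr rfl; intro q _; ring
    rw [Function.iterate_succ_apply, e, LL_iter_add, LL_iter_add, LL_iter_add]
    have b1 : |(LL J)^[k] (LL J (fun z => f z ^ 2)) x| ≤ c ^ 2 := by
      apply LL_iter_le hJ h1
      apply LL_le hJ h1
      intro z
      rw [abs_pow]
      exact pow_le_pow_left₀ (abs_nonneg _) (hf z) 2
    have b2 := cross_bound hJ h1 f (LL J f) c hf (fun j => s (j + 1))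
      (fun j z => by have := hs (j + 1) z; rwa [Function.iterate_succ_apply] at this) k x
    have b3 := ih x
    set S := ∑ j ∈ Finset.range k, s (j + 1) with hS
    have hSS : S ≤ ∑ j ∈ Finset.range (k + 1), s (j + 1) := by
      rw [Finset.sum_range_succ]; linarith [hs0 (k + 1)]
    have hmono : (k + 1 : ℝ) * (c ^ 2 + 2 * (c * S)) ≤
        ((k + 1 : ℕ) : ℝ) * (c ^ 2 + 2 * (c * ∑ j ∈ Finset.range (k + 1), s (j + 1))) := by
      push_cast
      gcongr
    refine le_trans ?_ hmono
    refine (abs_add_le _ _).trans ?_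
    have t1 := abs_add_le ((LL J)^[k] (fun z => LL J f z * birkhoff f k z) x +
      (LL J)^[k] (fun z => LL J f z * birkhoff f k z) x) ((LL J)^[k] (fun z => birkhoff f k z ^ 2) x)
    have t2 := abs_add_le ((LL J)^[k] (fun z => LL J f z * birkhoff f k z) x)
      ((LL J)^[k] (fun z => LL J f z * birkhoff f k z) x)
    linarith

end lln

end GS
namespace GS

variable {𝒜 : Type}

section distortion

lemma dOmega_le {n : ℕ} {x z : Omega 𝒜} (h : ∀ i < n, x i = z i) :
    dOmega x z ≤ (1 / 2 : ℝ) ^ n := by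
  unfold dOmega
  split_ifs with hxz
  · positivity
  · apply pow_le_pow_of_le_one (by norm_num) (by norm_num)
    have hne : {k : ℕ | x k ≠ z k}.Nonempty := by
      by_contra hcon
      rw [Set.not_nonempty_iff_eq_empty] at hcon
      apply hxz; funext k
      by_contra hk
      have : k ∈ {k : ℕ | x k ≠ z k} := hk
      rw [hcon] at this; exact this
    have hmem := Nat.sInf_mem hne
    by_contra hlt
    exact hmem (h _ (by omega))

lemma dOmega_nonneg (x z : Omega 𝒜) : 0 ≤ dOmega x z := by
  unfold dOmega; split_ifs <;> positivity

lemma concat_agree {k : ℕ} (w : Fin k → 𝒜) (x z : Omega 𝒜) : ∀ i < k, concat w x i = concat w z i := by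
  intro i hi; simp [concat, hi]

lemma birkhoff_distortion {f : Omega 𝒜 → ℝ} {α : ℝ} (hα : 0 < α) (hf : IsHolderW α f) :
    ∃ D : ℝ, 0 ≤ D ∧ ∀ (n : ℕ) (w : Fin n → 𝒜) (x z : Omega 𝒜),
      |birkhoff f n (concat w x) - birkhoff f n (concat w z)| ≤ D := by
  obtain ⟨C, hC⟩ := hf
  set ρ : ℝ := (1 / 2 : ℝ) ^ α with hρ
  have hρ0 : 0 ≤ ρ := by positivity
  have hρ1 : ρ < 1 := Real.rpow_lt_one (by norm_num) (by norm_num) hα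
  have hstep : ∀ (n : ℕ) (x z : Omega 𝒜), (∀ i < n, x i = z i) → |f x - f z| ≤ |C| * ρ ^ n := by
    intro n x z h
    have h1 := hC x z
    rw [Real.norm_eq_abs] at h1
    have h2 : dOmega x z ^ α ≤ ρ ^ n := by
      calc dOmega x z ^ α ≤ ((1 / 2 : ℝ) ^ n) ^ α :=
            Real.rpow_le_rpow (dOmega_nonneg _ _) (dOmega_le h) hα.le
        _ = ρ ^ n := by
            rw [hρ, ← Real.rpow_natCast, ← Real.rpow_natCast, ← Real.rpow_mul (by norm_num),
              ← Real.rpow_mul (by norm_num), mul_comm]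
    have h3 : 0 ≤ dOmega x z ^ α := Real.rpow_nonneg (dOmega_nonneg _ _) _
    calc |f x - f z| ≤ C * dOmega x z ^ α := h1
      _ ≤ |C| * dOmega x z ^ α := mul_le_mul_of_nonneg_right (le_abs_self _) h3
      _ ≤ _ := mul_le_mul_of_nonneg_left h2 (abs_nonneg _)
  have hind : ∀ (n : ℕ) (w : Fin n → 𝒜) (x z : Omega 𝒜),
      |birkhoff f n (concat w x) - birkhoff f n (concat w z)| ≤
        |C| * ∑ j ∈ Finset.range n, ρ ^ (j + 1) := by
    intro n
    induction n with
    | zero => intro w x z; simp [birkhoff]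
    | succ n ih =>
      intro w x z
      have hw := hstep (n + 1) _ _ (concat_agree w x z)
      have e : w = (Fin.cons (w 0) (Fin.tail w) : Fin (n + 1) → 𝒜) := (Fin.cons_self_tail w).symm
      rw [birkhoff_succ', birkhoff_succ']
      have e1 : ∀ x, shift (concat w x) = concat (Fin.tail w) x := by
        intro x; conv_lhs => rw [e]
        rw [concat_cons, shift_cons]
      rw [e1, e1, Finset.sum_range_succ, mul_add]
      have := ih (Fin.tail w) x z
      have t := abs_add_le (f (concat w x) - f (concat w z))
        (birkhoff f n (concat (Fin.tail w) x) - birkhoff f n (concat (Fin.tail w) z))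
      calc _ = |f (concat w x) - f (concat w z) + (birkhoff f n (concat (Fin.tail w) x) - birkhoff f n (concat (Fin.tail w) z))| := by congr 1; ring
        _ ≤ _ := by linarith
  refine ⟨|C| * (1 - ρ)⁻¹, mul_nonneg (abs_nonneg _) (inv_nonneg.2 (by linarith)), ?_⟩
  intro n w x z
  refine (hind n w x z).trans (mul_le_mul_of_nonneg_left ?_ (abs_nonneg _))
  have hsum := summable_geometric_of_lt_one hρ0 hρ1
  rw [← tsum_geometric_of_lt_one hρ0 hρ1]
  refine le_trans ?_ (hsum.sum_le_tsum (Finset.range n) (fun _ _ => by positivity))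
  apply Finset.sum_le_sum
  intro j _
  exact pow_le_pow_of_le_one hρ0 hρ1.le (by omega)

lemma JBirk_distortion {J : Omega 𝒜 → ℝ} {α : ℝ} (hα : 0 < α)
    (hf : IsHolderW α (fun z => Real.log (J z))) :
    ∃ K : ℝ, 1 ≤ K ∧ ∀ (n : ℕ) (w : Fin n → 𝒜) (x z : Omega 𝒜),
      JBirk J n w x ≤ K * JBirk J n w z := by
  obtain ⟨D, hD0, hD⟩ := birkhoff_distortion hα hf
  refine ⟨Real.exp D, Real.one_le_exp hD0, fun n w x z => ?_⟩
  rw [JBirk, JBirk, ← Real.exp_add]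
  apply Real.exp_le_exp.2
  have := (abs_le.1 (hD n w x z)).2
  linarith

end distortion

section convergence

variable [Fintype 𝒜] [TopologicalSpace 𝒜] [DiscreteTopology 𝒜] {J : Omega 𝒜 → ℝ}

lemma unif_cont {φ : Omega 𝒜 → ℝ} (hφ : Continuous φ) {ε : ℝ} (hε : 0 < ε) :
    ∃ N : ℕ, ∀ x z : Omega 𝒜, (∀ i < N, x i = z i) → |φ x - φ z| ≤ ε := by
  have hloc : ∀ z : Omega 𝒜, ∃ n : ℕ, PiNat.cylinder z n ⊆ {x | |φ x - φ z| < ε / 2} := by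
    intro z
    have hU : IsOpen {x | |φ x - φ z| < ε / 2} :=
      isOpen_lt (by fun_prop) continuous_const
    obtain ⟨v, ⟨y, n, rfl⟩, hzv, hv⟩ :=
      (PiNat.isTopologicalBasis_cylinders (fun _ => 𝒜)).exists_subset_of_mem_open
        (show z ∈ {x | |φ x - φ z| < ε / 2} by simpa using half_pos hε) hU
    refine ⟨n, ?_⟩
    rwa [← PiNat.mem_cylinder_iff_eq.1 hzv] at hv
  choose n hn using hloc
  obtain ⟨t, -, ht⟩ := (isCompact_univ (X := Omega 𝒜)).elim_nhds_subcover
    (fun z => PiNat.cylinder z (n z)) (fun z _ =>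
      (PiNat.isOpen_cylinder (fun _ => 𝒜) z (n z)).mem_nhds (PiNat.self_mem_cylinder z (n z)))
  refine ⟨t.sup n, fun x z hxz => ?_⟩
  obtain ⟨u, hut, hxu⟩ : ∃ u ∈ t, x ∈ PiNat.cylinder u (n u) := by
    simpa using ht (Set.mem_univ x)
  have hzu : z ∈ PiNat.cylinder u (n u) := by
    intro i hi
    rw [← hxz i (lt_of_lt_of_le hi (Finset.le_sup hut))]
    exact hxu i hi
  have h1 : |φ x - φ u| < ε / 2 := hn u hxu
  have h2 : |φ z - φ u| < ε / 2 := hn u hzu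
  have := abs_sub_le (φ x) (φ u) (φ z)
  rw [abs_sub_comm (φ u)] at this
  linarith

lemma continuous_cons (q : 𝒜) : Continuous (cons q : Omega 𝒜 → Omega 𝒜) := by
  apply continuous_pi
  intro n
  cases n with
  | zero => exact continuous_const
  | succ n => exact continuous_apply n

lemma continuous_shift : Continuous (shift : Omega 𝒜 → Omega 𝒜) :=
  continuous_pi fun n => continuous_apply (n + 1)

lemma continuous_concat {k : ℕ} (w : Fin k → 𝒜) : Continuous (concat w : Omega 𝒜 → Omega 𝒜) := by
  apply continuous_pi
  intro n
  unfold concat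
  by_cases h : n < k
  · simp only [h, dif_pos]; exact continuous_const
  · simp only [h, dif_neg, not_false_eq_true]; exact continuous_apply _

lemma continuous_birkhoff {f : Omega 𝒜 → ℝ} (hf : Continuous f) (k : ℕ) :
    Continuous (birkhoff f k) := by
  unfold birkhoff
  exact continuous_finsetSum _ fun j _ => hf.comp (continuous_shift.iterate j)

lemma continuous_LL (hJ : Continuous J) {φ : Omega 𝒜 → ℝ} (hφ : Continuous φ) :
    Continuous (LL J φ) := by
  unfold LL
  exact continuous_finsetSum _ fun q _ =>
    (hJ.comp (continuous_cons q)).mul (hφ.comp (continuous_cons q))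

lemma continuous_LL_iter (hJ : Continuous J) {φ : Omega 𝒜 → ℝ} (hφ : Continuous φ) (k : ℕ) :
    Continuous ((LL J)^[k] φ) := by
  induction k with
  | zero => exact hφ
  | succ k ih => rw [Function.iterate_succ_apply']; exact continuous_LL hJ ih

/-- Oscillation of `ψ` at most `r`. -/
def OscLe (ψ : Omega 𝒜 → ℝ) (r : ℝ) : Prop := ∃ c, ∀ x, c ≤ ψ x ∧ ψ x ≤ c + r


lemma osc_LL (hJ : ∀ x, 0 < J x) (h1 : ∀ x : Omega 𝒜, ∑ q : 𝒜, J (cons q x) = 1)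
    {ψ : Omega 𝒜 → ℝ} {r : ℝ} (h : OscLe ψ r) : OscLe (LL J ψ) r := by
  obtain ⟨c, hc⟩ := h
  refine ⟨c, fun x => ⟨?_, ?_⟩⟩
  · calc c = ∑ q : 𝒜, J (cons q x) * c := by rw [← Finset.sum_mul, h1, one_mul]
      _ ≤ _ := Finset.sum_le_sum fun q _ => mul_le_mul_of_nonneg_left (hc _).1 (hJ _).le
  · calc _ ≤ ∑ q : 𝒜, J (cons q x) * (c + r) :=
          Finset.sum_le_sum fun q _ => mul_le_mul_of_nonneg_left (hc _).2 (hJ _).le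
      _ = _ := by rw [← Finset.sum_mul, h1, one_mul]

lemma osc_LL_iter (hJ : ∀ x, 0 < J x) (h1 : ∀ x : Omega 𝒜, ∑ q : 𝒜, J (cons q x) = 1)
    {ψ : Omega 𝒜 → ℝ} {r : ℝ} (h : OscLe ψ r) (k : ℕ) : OscLe ((LL J)^[k] ψ) r := by
  induction k with
  | zero => exact h
  | succ k ih => rw [Function.iterate_succ_apply']; exact osc_LL hJ h1 ih

lemma osc_contract [Nonempty 𝒜] (hJc : Continuous J) (hJ : ∀ x, 0 < J x)
    (h1 : ∀ x : Omega 𝒜, ∑ q : 𝒜, J (cons q x) = 1)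
    {K : ℝ} (hK1 : 1 ≤ K) (hK : ∀ (n : ℕ) (w : Fin n → 𝒜) (x z : Omega 𝒜),
      JBirk J n w x ≤ K * JBirk J n w z)
    {ψ : Omega 𝒜 → ℝ} (hψ : Continuous ψ) {r : ℝ} (h : OscLe ψ r) {ε : ℝ} (hε : 0 < ε) :
    ∃ n, OscLe ((LL J)^[n] ψ) ((1 - K⁻¹) * r + ε) := by
  obtain ⟨n, hn⟩ := unif_cont hψ hε
  obtain ⟨c, hc⟩ := h
  have hK0 : 0 < K := by linarith
  have hKi : K⁻¹ ≤ 1 := inv_le_one_of_one_le₀ hK1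
  refine ⟨n, ?_⟩
  have hmain : ∀ x z, (LL J)^[n] ψ x ≤ (LL J)^[n] ψ z + ((1 - K⁻¹) * r + ε) := by
    intro x z
    rw [LL_iter hJ, LL_iter hJ]
    have s1 := sum_JBirk hJ h1 n x
    have s2 := sum_JBirk hJ h1 n z
    have a1 : ∑ w : Fin n → 𝒜, (JBirk J n w x - K⁻¹ * JBirk J n w z) * ψ (concat w x) ≤
        (1 - K⁻¹) * (c + r) := by
      calc _ ≤ ∑ w : Fin n → 𝒜, (JBirk J n w x - K⁻¹ * JBirk J n w z) * (c + r) := by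
            apply Finset.sum_le_sum
            intro w _
            apply mul_le_mul_of_nonneg_left (hc _).2
            have := hK n w z x
            rw [sub_nonneg, inv_mul_le_iff₀ hK0]; exact this
        _ = _ := by rw [← Finset.sum_mul, Finset.sum_sub_distrib, ← Finset.mul_sum, s1, s2, mul_one]
    have a2 : (1 - K⁻¹) * c ≤ ∑ w : Fin n → 𝒜, ((1 - K⁻¹) * JBirk J n w z) * ψ (concat w z) := by
      calc _ = ∑ w : Fin n → 𝒜, ((1 - K⁻¹) * JBirk J n w z) * c := by
            rw [← Finset.sum_mul, ← Finset.mul_sum, s2, mul_one]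
        _ ≤ _ := by
            apply Finset.sum_le_sum
            intro w _
            apply mul_le_mul_of_nonneg_left (hc _).1
            exact mul_nonneg (by linarith) (JBirk_pos _ _ _ _).le
    have a3 : ∑ w : Fin n → 𝒜, (K⁻¹ * JBirk J n w z) * (ψ (concat w x) - ψ (concat w z)) ≤ ε := by
      calc _ ≤ ∑ w : Fin n → 𝒜, (K⁻¹ * JBirk J n w z) * ε := by
            apply Finset.sum_le_sum
            intro w _
            apply mul_le_mul_of_nonneg_left
            · exact (le_abs_self _).trans (hn _ _ (concat_agree w x z))
            · exact mul_nonneg (by positivity) (JBirk_pos _ _ _ _).le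
        _ = K⁻¹ * ε := by rw [← Finset.sum_mul, ← Finset.mul_sum, s2, mul_one]
        _ ≤ _ := by nlinarith
    have e : ∑ w : Fin n → 𝒜, JBirk J n w x * ψ (concat w x) =
        ∑ w : Fin n → 𝒜, JBirk J n w z * ψ (concat w z) +
        (∑ w : Fin n → 𝒜, (JBirk J n w x - K⁻¹ * JBirk J n w z) * ψ (concat w x) -
        ∑ w : Fin n → 𝒜, ((1 - K⁻¹) * JBirk J n w z) * ψ (concat w z) +
        ∑ w : Fin n → 𝒜, (K⁻¹ * JBirk J n w z) * (ψ (concat w x) - ψ (concat w z))) := by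
      rw [← Finset.sum_sub_distrib, ← Finset.sum_add_distrib, ← Finset.sum_add_distrib]
      apply Finset.sum_congr rfl; intro w _; ring
    rw [e]
    linarith
  obtain ⟨z, -, hz⟩ := (isCompact_univ (X := Omega 𝒜)).exists_isMinOn univ_nonempty
    (continuous_LL_iter hJc hψ n).continuousOn
  exact ⟨(LL J)^[n] ψ z, fun x => ⟨hz (Set.mem_univ x), hmain x z⟩⟩

lemma osc_tendsto [Nonempty 𝒜] (hJc : Continuous J) (hJ : ∀ x, 0 < J x)
    (h1 : ∀ x : Omega 𝒜, ∑ q : 𝒜, J (cons q x) = 1)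
    {K : ℝ} (hK1 : 1 ≤ K) (hK : ∀ (n : ℕ) (w : Fin n → 𝒜) (x z : Omega 𝒜),
      JBirk J n w x ≤ K * JBirk J n w z)
    {φ : Omega 𝒜 → ℝ} (hφ : Continuous φ) {ε : ℝ} (hε : 0 < ε) :
    ∃ N, ∀ n ≥ N, OscLe ((LL J)^[n] φ) ε := by
  have hK0 : 0 < K := by linarith
  have hKi : K⁻¹ ≤ 1 := inv_le_one_of_one_le₀ hK1
  have hKp : 0 < K⁻¹ := by positivity
  obtain ⟨r, hr0, hr⟩ : ∃ r > 0, OscLe φ r := by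
    obtain ⟨C, hC⟩ := (isCompact_univ (X := Omega 𝒜)).exists_bound_of_continuousOn hφ.continuousOn
    refine ⟨2 * |C| + 1, by positivity, -|C|, fun x => ?_⟩
    have := abs_le.1 ((hC x (Set.mem_univ x)).trans (le_abs_self C))
    constructor <;> linarith [this.1, this.2, abs_nonneg C]
  have hind : ∀ j : ℕ, ∃ m, OscLe ((LL J)^[m] φ) ((1 - K⁻¹ / 2) ^ j * r) := by
    intro j
    induction j with
    | zero => exact ⟨0, by simpa using hr⟩
    | succ j ih =>
      obtain ⟨m, hm⟩ := ih
      set s := (1 - K⁻¹ / 2) ^ j * r with hs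
      have hs0 : 0 < s := mul_pos (pow_pos (by linarith) _) hr0
      obtain ⟨n, hn⟩ := osc_contract hJc hJ h1 hK1 hK (continuous_LL_iter hJc hφ m) hm
        (show 0 < K⁻¹ / 2 * s by positivity)
      refine ⟨n + m, ?_⟩
      rw [Function.iterate_add_apply]
      have : (1 - K⁻¹ / 2) ^ (j + 1) * r = (1 - K⁻¹) * s + K⁻¹ / 2 * s := by
        rw [pow_succ, hs]; ring
      rw [this]; exact hn
  have hlim : Tendsto (fun j : ℕ => (1 - K⁻¹ / 2) ^ j * r) atTop (𝓝 (0 * r)) :=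
    (tendsto_pow_atTop_nhds_zero_of_lt_one (by linarith) (by linarith)).mul_const r
  rw [zero_mul] at hlim
  obtain ⟨j, hj⟩ := (hlim.eventually_lt_const hε).exists
  obtain ⟨m, c, hc⟩ := hind j
  refine ⟨m, fun n hn => ?_⟩
  obtain ⟨d, rfl⟩ := Nat.exists_eq_add_of_le' hn
  rw [Function.iterate_add_apply]
  exact osc_LL_iter hJ h1 ⟨c, fun x => ⟨(hc x).1, (hc x).2.trans (by linarith)⟩⟩ d

end convergence

section measure

variable [Fintype 𝒜] [TopologicalSpace 𝒜] [DiscreteTopology 𝒜]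
    [MeasurableSpace 𝒜] [BorelSpace 𝒜] {J : Omega 𝒜 → ℝ} {μ : Measure (Omega 𝒜)}

lemma integrable_cont [IsProbabilityMeasure μ] {φ : Omega 𝒜 → ℝ} (hφ : Continuous φ) :
    Integrable φ μ := by
  obtain ⟨C, hC⟩ := (isCompact_univ (X := Omega 𝒜)).exists_bound_of_continuousOn hφ.continuousOn
  exact Integrable.of_bound hφ.aestronglyMeasurable C
    (Filter.Eventually.of_forall fun x => hC x (Set.mem_univ x))

lemma integral_LL (hJ : ∀ x, 0 < J x) (hμ : IsGMeasure J μ) {φ : Omega 𝒜 → ℝ}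
    (hφ : Continuous φ) : ∫ x, LL J φ x ∂μ = ∫ x, φ x ∂μ := by
  have h := hμ.2 (fun x => (φ x : ℂ)) (Complex.continuous_ofReal.comp hφ)
  have e : ruelle (fun z => Real.log (J z)) (fun x => (φ x : ℂ)) = fun x => ((LL J φ x : ℝ) : ℂ) := by
    funext x
    simp only [ruelle, LL, Real.exp_log (hJ _)]
    push_cast
    simp
  rw [e, integral_complex_ofReal, integral_complex_ofReal] at h
  exact_mod_cast h

lemma integral_LL_iter (hJc : Continuous J) (hJ : ∀ x, 0 < J x) (hμ : IsGMeasure J μ)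
    {φ : Omega 𝒜 → ℝ} (hφ : Continuous φ) (k : ℕ) : ∫ x, (LL J)^[k] φ x ∂μ = ∫ x, φ x ∂μ := by
  induction k with
  | zero => rfl
  | succ k ih =>
    rw [← ih]
    simp only [Function.iterate_succ_apply']
    exact integral_LL hJ hμ (continuous_LL_iter hJc hφ k)

lemma LL_unif [Nonempty 𝒜] (hJc : Continuous J) (hJ : ∀ x, 0 < J x)
    (h1 : ∀ x : Omega 𝒜, ∑ q : 𝒜, J (cons q x) = 1)
    {K : ℝ} (hK1 : 1 ≤ K) (hK : ∀ (n : ℕ) (w : Fin n → 𝒜) (x z : Omega 𝒜),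
      JBirk J n w x ≤ K * JBirk J n w z) (hμ : IsGMeasure J μ)
    {φ : Omega 𝒜 → ℝ} (hφ : Continuous φ) {ε : ℝ} (hε : 0 < ε) :
    ∃ N, ∀ n ≥ N, ∀ x, |(LL J)^[n] φ x - ∫ z, φ z ∂μ| ≤ ε := by
  obtain ⟨N, hN⟩ := osc_tendsto hJc hJ h1 hK1 hK hφ hε
  refine ⟨N, fun n hn x => ?_⟩
  obtain ⟨c, hc⟩ := hN n hn
  have := hμ.1
  have hi := integrable_cont (μ := μ) (continuous_LL_iter hJc hφ n)
  have l1 : c ≤ ∫ z, (LL J)^[n] φ z ∂μ := by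
    have := integral_mono (μ := μ) (integrable_const c) hi (fun z => (hc z).1)
    simpa using this
  have l2 : ∫ z, (LL J)^[n] φ z ∂μ ≤ c + ε := by
    have := integral_mono (μ := μ) hi (integrable_const (c + ε)) (fun z => (hc z).2)
    simpa using this
  rw [integral_LL_iter hJc hJ hμ hφ] at l1 l2
  rw [abs_le]
  constructor <;> linarith [(hc x).1, (hc x).2]

end measure

end GS
namespace GS

variable {𝒜 : Type}

lemma tendsto_of_abs {u : ℕ → ℝ} {l : ℝ} (h : ∀ ε > 0, ∀ᶠ n in atTop, |u n - l| ≤ ε) :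
    Tendsto u atTop (𝓝 l) := by
  rw [Metric.tendsto_nhds]
  intro ε hε
  filter_upwards [h (ε / 2) (by positivity)] with n hn
  rw [Real.dist_eq]; linarith

section entropy

variable [Fintype 𝒜] [TopologicalSpace 𝒜] [DiscreteTopology 𝒜]
    [MeasurableSpace 𝒜] [BorelSpace 𝒜] {J : Omega 𝒜 → ℝ} {μ : Measure (Omega 𝒜)}

lemma concat_mem_cyl {k : ℕ} (w w' : Fin k → 𝒜) (z : Omega 𝒜) :
    concat w' z ∈ cyl w ↔ w' = w := by
  simp only [cyl, Set.mem_setOf_eq, concat, Fin.is_lt, dif_pos, Fin.eta, funext_iff]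

lemma isClopen_cyl {k : ℕ} (w : Fin k → 𝒜) : IsClopen (cyl w) := by
  have : cyl w = ⋂ i : Fin k, (fun x : Omega 𝒜 => x i) ⁻¹' {w i} := by
    ext x; simp [cyl]
  rw [this]
  exact isClopen_iInter_of_finite fun i => (isClopen_discrete _).preimage (continuous_apply _)

lemma continuous_log (hJc : Continuous J) (hJ : ∀ x, 0 < J x) :
    Continuous (fun z => Real.log (J z)) := hJc.log fun x => (hJ x).ne'

lemma continuous_JBirk (hJc : Continuous J) (hJ : ∀ x, 0 < J x) {k : ℕ} (w : Fin k → 𝒜) :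
    Continuous (fun z => JBirk J k w z) :=
  Real.continuous_exp.comp
    ((continuous_birkhoff (continuous_log hJc hJ) k).comp (continuous_concat w))

lemma measure_cyl (hJc : Continuous J) (hJ : ∀ x, 0 < J x) (hμ : IsGMeasure J μ) {k : ℕ}
    (w : Fin k → 𝒜) : (μ (cyl w)).toReal = ∫ z, JBirk J k w z ∂μ := by
  have := hμ.1
  have hc : Continuous ((cyl w).indicator (fun _ => (1:ℝ))) :=
    continuous_const.indicator (by rw [(isClopen_cyl w).frontier_eq]; simp)
  have h := integral_LL_iter hJc hJ hμ hc k
  rw [integral_indicator (isClopen_cyl w).isOpen.measurableSet] at h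
  simp only [integral_const, smul_eq_mul, mul_one, measureReal_restrict_apply_univ] at h
  rw [← measureReal_def, ← h]
  congr 1
  funext z
  rw [LL_iter hJ]
  rw [Finset.sum_eq_single w]
  · rw [Set.indicator_of_mem ((concat_mem_cyl w w z).2 rfl), mul_one]
  · intro w' _ hne
    rw [Set.indicator_of_notMem (fun hm => hne ((concat_mem_cyl w w' z).1 hm)), mul_zero]
  · simp

lemma integral_birkhoff (hJ : ∀ x, 0 < J x) (h1 : ∀ x : Omega 𝒜, ∑ q : 𝒜, J (cons q x) = 1)
    (hμ : IsGMeasure J μ) {f : Omega 𝒜 → ℝ}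
    (hf : Continuous f) (k : ℕ) : ∫ z, birkhoff f k z ∂μ = k * ∫ z, f z ∂μ := by
  have := hμ.1
  induction k with
  | zero => simp [birkhoff]
  | succ k ih =>
    have e : ∫ z, birkhoff f k (shift z) ∂μ = ∫ z, birkhoff f k z ∂μ := by
      rw [← integral_LL (φ := fun z => birkhoff f k (shift z)) hJ hμ
        ((continuous_birkhoff hf k).comp continuous_shift)]
      congr 1; funext z
      simp [LL, shift_cons, ← Finset.sum_mul, h1]
    have hi2 : Integrable (fun z => birkhoff f k (shift z)) μ :=
      integrable_cont ((continuous_birkhoff hf k).comp continuous_shift)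
    simp only [birkhoff_succ']
    rw [integral_add (integrable_cont hf) hi2, e, ih]
    push_cast; ring

lemma entropy_bounds (hJc : Continuous J) (hJ : ∀ x, 0 < J x)
    (h1 : ∀ x : Omega 𝒜, ∑ q : 𝒜, J (cons q x) = 1)
    {K : ℝ} (hK1 : 1 ≤ K) (hK : ∀ (n : ℕ) (w : Fin n → 𝒜) (x z : Omega 𝒜),
      JBirk J n w x ≤ K * JBirk J n w z) (hμ : IsGMeasure J μ) (n : ℕ) :
    n * (-∫ z, Real.log (J z) ∂μ) ≤ blockEntropy μ n ∧
    blockEntropy μ n ≤ n * (-∫ z, Real.log (J z) ∂μ) + Real.log K := by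
  have := hμ.1
  set m : (Fin n → 𝒜) → ℝ := fun w => ∫ z, JBirk J n w z ∂μ with hm
  have hcJ : ∀ w : Fin n → 𝒜, Continuous (fun z => JBirk J n w z) := continuous_JBirk hJc hJ
  have hcl : ∀ w : Fin n → 𝒜, Continuous (fun z => JBirk J n w z * Real.log (JBirk J n w z)) :=
    fun w => (hcJ w).mul ((hcJ w).log fun z => (JBirk_pos _ _ _ _).ne')
  have hKm : ∀ w z, JBirk J n w z ≤ K * m w := by
    intro w z
    have := integral_mono (μ := μ) (integrable_const (JBirk J n w z))
      (integrable_cont ((hcJ w).const_mul K)) (fun z' => hK n w z z')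
    rw [integral_const_mul] at this
    simpa using this
  have hmpos : ∀ w, 0 < m w := by
    intro w
    have hne : Nonempty (Omega 𝒜) := by
      by_contra hne
      rw [not_nonempty_iff] at hne
      have : μ Set.univ = 1 := measure_univ
      rw [Set.univ_eq_empty_iff.2 hne] at this
      simp at this
    obtain ⟨z⟩ := hne
    have := (JBirk_pos J n w z).trans_le (hKm w z)
    have hK0 : 0 < K := by linarith
    exact (pos_iff_pos_of_mul_pos this).1 hK0
  have hmsum : ∑ w, m w = 1 := by
    rw [← integral_finsetSum _ (fun w _ => integrable_cont (hcJ w))]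
    simp [sum_JBirk hJ h1]
  have hH : blockEntropy μ n = -∑ w, m w * Real.log (m w) := by
    unfold blockEntropy
    rw [← Finset.sum_neg_distrib]
    apply Finset.sum_congr rfl
    intro w _
    rw [measure_cyl hJc hJ hμ, Real.negMulLog]; ring
  have htot : ∑ w : Fin n → 𝒜, ∫ z, JBirk J n w z * Real.log (JBirk J n w z) ∂μ =
      n * ∫ z, Real.log (J z) ∂μ := by
    rw [← integral_finsetSum _ (fun w _ => integrable_cont (hcl w))]
    rw [← integral_birkhoff hJ h1 hμ (continuous_log hJc hJ),
      ← integral_LL_iter hJc hJ hμ (continuous_birkhoff (continuous_log hJc hJ) n) n]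
    congr 1; funext z
    rw [LL_iter hJ]
    apply Finset.sum_congr rfl
    intro w _
    congr 1
    exact Real.log_exp _
  have hlow : ∀ w, m w * Real.log (m w) ≤ ∫ z, JBirk J n w z * Real.log (JBirk J n w z) ∂μ := by
    intro w
    have hpt : ∀ z, JBirk J n w z * Real.log (m w) + (JBirk J n w z - m w) ≤
        JBirk J n w z * Real.log (JBirk J n w z) := by
      intro z
      have ht := JBirk_pos J n w z
      have := Real.log_le_sub_one_of_pos (div_pos (hmpos w) ht)
      rw [Real.log_div (hmpos w).ne' ht.ne'] at this
      have h2 := mul_le_mul_of_nonneg_left this ht.le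
      have h3 : JBirk J n w z * (m w / JBirk J n w z - 1) = m w - JBirk J n w z := by
        field_simp
      rw [h3] at h2
      linarith
    have i1 : Integrable (fun z => JBirk J n w z * Real.log (m w)) μ :=
      integrable_cont ((hcJ w).mul continuous_const)
    have i2 : Integrable (fun z => JBirk J n w z - m w) μ :=
      integrable_cont ((hcJ w).sub continuous_const)
    have : ∫ z, (JBirk J n w z * Real.log (m w) + (JBirk J n w z - m w)) ∂μ ≤
        ∫ z, JBirk J n w z * Real.log (JBirk J n w z) ∂μ :=
      integral_mono (i1.add i2) (integrable_cont (hcl w)) hpt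
    rw [integral_add i1 i2, integral_mul_const,
      integral_sub (integrable_cont (hcJ w)) (integrable_const _)] at this
    simp only [integral_const, probReal_univ, one_smul] at this
    change m w * Real.log (m w) + (m w - m w) ≤ _ at this
    linarith
  have hupp : ∀ w, ∫ z, JBirk J n w z * Real.log (JBirk J n w z) ∂μ ≤
      m w * Real.log (m w) + m w * Real.log K := by
    intro w
    have hpt : ∀ z, JBirk J n w z * Real.log (JBirk J n w z) ≤
        JBirk J n w z * (Real.log K + Real.log (m w)) := by
      intro z
      have ht := JBirk_pos J n w z
      apply mul_le_mul_of_nonneg_left _ ht.le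
      rw [← Real.log_mul (by positivity) (hmpos w).ne']
      exact Real.log_le_log ht (hKm w z)
    have : ∫ z, JBirk J n w z * Real.log (JBirk J n w z) ∂μ ≤
        ∫ z, JBirk J n w z * (Real.log K + Real.log (m w)) ∂μ :=
      integral_mono (integrable_cont (hcl w))
        (integrable_cont ((hcJ w).mul continuous_const)) hpt
    rw [integral_mul_const] at this
    change _ ≤ m w * _ at this
    linarith
  constructor
  · rw [hH, mul_neg, ← htot]
    exact neg_le_neg (Finset.sum_le_sum fun w _ => hlow w)
  · rw [hH, mul_neg, ← htot]
    have := Finset.sum_le_sum (fun w (_ : w ∈ Finset.univ) => hupp w)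
    rw [Finset.sum_add_distrib, ← Finset.sum_mul, hmsum, one_mul] at this
    linarith

lemma entropy_eq (hJc : Continuous J) (hJ : ∀ x, 0 < J x)
    (h1 : ∀ x : Omega 𝒜, ∑ q : 𝒜, J (cons q x) = 1)
    {K : ℝ} (hK1 : 1 ≤ K) (hK : ∀ (n : ℕ) (w : Fin n → 𝒜) (x z : Omega 𝒜),
      JBirk J n w x ≤ K * JBirk J n w z) (hμ : IsGMeasure J μ) :
    KSentropy μ = -∫ z, Real.log (J z) ∂μ := by
  set h := -∫ z, Real.log (J z) ∂μ with hh
  have hb := entropy_bounds hJc hJ h1 hK1 hK hμ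
  have hlow : ∀ n : ℕ, h ≤ blockEntropy μ (n + 1) / (n + 1) := by
    intro n
    rw [le_div_iff₀ (by positivity)]
    have := (hb (n + 1)).1
    push_cast at this
    linarith
  apply le_antisymm
  · have hle : ∀ n : ℕ, KSentropy μ ≤ h + Real.log K * (1 / ((n : ℝ) + 1)) := by
      intro n
      have h2 : KSentropy μ ≤ blockEntropy μ (n + 1) / (n + 1) :=
        ciInf_le ⟨h, by rintro _ ⟨n, rfl⟩; exact hlow n⟩ n
      refine h2.trans ?_
      rw [div_le_iff₀ (by positivity)]
      have := (hb (n + 1)).2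
      push_cast at this
      have e : (h + Real.log K * (1 / ((n : ℝ) + 1))) * (n + 1) = (n + 1) * h + Real.log K := by
        field_simp
      rw [e]; exact this
    have hlim : Tendsto (fun n : ℕ => h + Real.log K * (1 / ((n : ℝ) + 1))) atTop
        (𝓝 (h + Real.log K * 0)) :=
      (tendsto_one_div_add_atTop_nhds_zero_nat.const_mul _).const_add _
    rw [mul_zero, add_zero] at hlim
    exact ge_of_tendsto' hlim hle
  · exact le_ciInf hlow

lemma lln_words [Nonempty 𝒜] (hJc : Continuous J) (hJ : ∀ x, 0 < J x)
    (h1 : ∀ x : Omega 𝒜, ∑ q : 𝒜, J (cons q x) = 1)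
    {K : ℝ} (hK1 : 1 ≤ K) (hK : ∀ (n : ℕ) (w : Fin n → 𝒜) (x z : Omega 𝒜),
      JBirk J n w x ≤ K * JBirk J n w z) (hμ : IsGMeasure J μ) (x : Omega 𝒜) {δ : ℝ} (hδ : 0 < δ) :
    Tendsto (badMass (W := fun k => Fin (k + 1) → 𝒜) (fun k w => JBirk J (k + 1) w x)
      (-∫ z, Real.log (J z) ∂μ) δ) atTop (𝓝 0) := by
  have := hμ.1
  set h := -∫ z, Real.log (J z) ∂μ with hh
  set f : Omega 𝒜 → ℝ := fun z => Real.log (J z) + h with hf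
  have hlc := continuous_log hJc hJ
  have hfc : Continuous f := hlc.add continuous_const
  have hf0 : ∫ z, f z ∂μ = 0 := by
    rw [hf, integral_add (integrable_cont hlc) (integrable_const _)]
    simp [hh]
  obtain ⟨c, hc⟩ := (isCompact_univ (X := Omega 𝒜)).exists_bound_of_continuousOn hfc.continuousOn
  have hc : ∀ z, |f z| ≤ c := fun z => hc z (Set.mem_univ z)
  set s : ℕ → ℝ := fun j => ⨆ z, |(LL J)^[j] f z| with hs
  have hsle : ∀ j z, |(LL J)^[j] f z| ≤ s j := fun j z =>
    le_ciSup (f := fun z => |(LL J)^[j] f z|)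
      ⟨c, by rintro _ ⟨z, rfl⟩; exact LL_iter_le hJ h1 j hc z⟩ z
  have hs0 : Tendsto s atTop (𝓝 0) := by
    apply tendsto_of_abs
    intro ε hε
    obtain ⟨N, hN⟩ := LL_unif hJc hJ h1 hK1 hK hμ hfc hε
    filter_upwards [eventually_ge_atTop N] with n hn
    rw [sub_zero, abs_of_nonneg ((abs_nonneg _).trans (hsle n x))]
    apply ciSup_le
    intro z
    have := hN n hn z
    rwa [hf0, sub_zero] at this
  have hbk : ∀ (k : ℕ) (z : Omega 𝒜), birkhoff f k z =
      birkhoff (fun z => Real.log (J z)) k z + k * h := by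
    intro k z; simp [birkhoff, hf, Finset.sum_add_distrib]
  set R : ℕ → ℝ := fun n => (c ^ 2 * (1 / (n : ℝ)) +
    2 * c * ((n : ℝ)⁻¹ * ∑ j ∈ Finset.range n, s (j + 1))) / δ ^ 2 with hR
  have hRlim : Tendsto (fun k => R (k + 1)) atTop (𝓝 0) := by
    have l1 := ((tendsto_one_div_atTop_nhds_zero_nat (𝕜 := ℝ)).const_mul (c ^ 2)).add
      (((hs0.comp (tendsto_add_atTop_nat 1)).cesaro).const_mul (2 * c))
    have l2 := (l1.div_const (δ ^ 2)).comp (tendsto_add_atTop_nat 1)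
    simp only [mul_zero, add_zero, zero_div] at l2
    exact l2
  refine squeeze_zero (fun k => ?_) (fun k => ?_) hRlim
  · apply Finset.sum_nonneg; intro w _; split_ifs
    · exact le_rfl
    · exact (JBirk_pos _ _ _ _).le
  · have hv := (le_abs_self _).trans (var_bound hJ h1 f c hc s hsle (k + 1) x)
    rw [LL_iter hJ] at hv
    have hnpos : (0:ℝ) < ((k + 1 : ℕ) : ℝ) := by positivity
    have hpos : (0:ℝ) < (((k + 1 : ℕ) : ℝ) * δ) ^ 2 := by positivity
    have hcheb : badMass (W := fun k => Fin (k + 1) → 𝒜) (fun k w => JBirk J (k + 1) w x) h δ k *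
        (((k + 1 : ℕ) : ℝ) * δ) ^ 2 ≤
        ∑ w : Fin (k + 1) → 𝒜, JBirk J (k + 1) w x * birkhoff f (k + 1) (concat w x) ^ 2 := by
      rw [badMass, Finset.sum_mul]
      apply Finset.sum_le_sum
      intro w _
      have ht := JBirk_pos J (k + 1) w x
      split_ifs with hg
      · rw [zero_mul]; positivity
      · apply mul_le_mul_of_nonneg_left _ ht.le
        rw [← sq_abs (birkhoff f _ _)]
        apply pow_le_pow_left₀ (by positivity)
        rw [hbk]
        have : Real.log (JBirk J (k + 1) w x) =
          birkhoff (fun z => Real.log (J z)) (k + 1) (concat w x) := Real.log_exp _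
        rw [← this]
        push_cast
        exact (not_le.1 hg).le
    have h3 := hcheb.trans hv
    rw [← le_div_iff₀ hpos] at h3
    refine h3.trans (le_of_eq ?_)
    simp only [hR]
    field_simp

lemma J_lt_one (hcard : 2 ≤ Fintype.card 𝒜) (hJ : ∀ x, 0 < J x)
    (h1 : ∀ x : Omega 𝒜, ∑ q : 𝒜, J (cons q x) = 1) (z : Omega 𝒜) : J z < 1 := by
  have hz : cons (z 0) (shift z) = z := by
    funext n; cases n <;> rfl
  have : Nontrivial 𝒜 := Fintype.one_lt_card_iff_nontrivial.1 hcard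
  obtain ⟨q, hq⟩ := exists_ne (z 0)
  have h2 := h1 (shift z)
  have h3 : ∑ q' ∈ ({z 0, q} : Finset 𝒜), J (cons q' (shift z)) ≤ 1 := by
    rw [← h2]
    exact Finset.sum_le_univ_sum_of_nonneg fun q' => (hJ _).le
  rw [Finset.sum_pair hq.symm, hz] at h3
  linarith [hJ (cons q (shift z))]

lemma exists_decay [Nonempty 𝒜] (hcard : 2 ≤ Fintype.card 𝒜) (hJc : Continuous J)
    (hJ : ∀ x, 0 < J x)
    (h1 : ∀ x : Omega 𝒜, ∑ q : 𝒜, J (cons q x) = 1) :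
    ∃ κ > 0, ∀ z, Real.log (J z) ≤ -κ := by
  obtain ⟨z, -, hz⟩ := (isCompact_univ (X := Omega 𝒜)).exists_isMaxOn univ_nonempty
    (continuous_log hJc hJ).continuousOn
  refine ⟨-Real.log (J z), ?_, fun u => ?_⟩
  · have := Real.log_neg (hJ z) (J_lt_one hcard hJ h1 z); linarith
  · rw [neg_neg]; exact hz (Set.mem_univ u)

end entropy

section final

lemma words_finite [Fintype 𝒜] {p : (Σ k : ℕ, Fin (k + 1) → 𝒜) → ℝ} {κ : ℝ} (hκ : 0 < κ)
    (hp : ∀ v, 0 < p v) (hdec : ∀ v, Real.log (p v) ≤ -κ * (v.1 + 1)) (R : ℝ) :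
    {v | Real.exp (-R) < p v}.Finite := by
  apply Set.Finite.subset (Finset.finite_toSet ((Finset.range ⌈R / κ⌉₊).sigma
    (fun k => (Finset.univ : Finset (Fin (k + 1) → 𝒜)))))
  intro v hv
  simp only [Finset.coe_sigma, Set.mem_sigma_iff, Finset.coe_range, Set.mem_Iio, Finset.coe_univ,
    Set.mem_univ, and_true]
  have h1 : -R < Real.log (p v) := by
    rw [Real.lt_log_iff_exp_lt (hp v)]; exact hv
  have h2 := hdec v
  have h3 : ((v.1 : ℝ) + 1) ≤ R / κ := by rw [le_div_iff₀ hκ]; linarith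
  have h4 : ((v.1 : ℝ) + 1) ≤ ⌈R / κ⌉₊ := h3.trans (Nat.le_ceil _)
  exact_mod_cast h4

end final

end GS
namespace GS

variable {𝒜 : Type}

/-- Abstract final step: counting and summation along a decreasing enumeration. -/
lemma final_abs [Fintype 𝒜] (p : ∀ k : ℕ, (Fin (k + 1) → 𝒜) → ℝ)
    (hp : ∀ k w, 0 < p k w) (h1 : ∀ k, ∑ w, p k w = 1) (κ : ℝ) (hκ : 0 < κ)
    (hdec : ∀ k w, Real.log (p k w) ≤ -κ * (k + 1)) (h : ℝ) (hh : 0 < h)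
    (hlln : ∀ δ > 0, Tendsto (badMass (W := fun k => Fin (k + 1) → 𝒜) p h δ) atTop (𝓝 0))
    (b c : ∀ k : ℕ, (Fin (k + 1) → 𝒜) → ℝ) (B : ℝ) (hB0 : 0 ≤ B)
    (hb : ∀ k w, |b k w| ≤ B) (hc : ∀ k w, |c k w| ≤ B) (I : ℝ)
    (hmb : Tendsto (fun k => ∑ w, b k w * p k w) atTop (𝓝 I))
    (hmc : Tendsto (fun k => ∑ w, c k w * p k w) atTop (𝓝 I))
    (e : ℕ → (Σ k : ℕ, Fin (k + 1) → 𝒜) ⊕ (Σ k : ℕ, Fin (k + 1) → 𝒜))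
    (hbij : Function.Bijective e)
    (lam val : (Σ k : ℕ, Fin (k + 1) → 𝒜) ⊕ (Σ k : ℕ, Fin (k + 1) → 𝒜) → ℝ)
    (hl1 : ∀ v, lam (Sum.inl v) = p v.1 v.2) (hl2 : ∀ v, lam (Sum.inr v) = p v.1 v.2)
    (hv1 : ∀ v, val (Sum.inl v) = b v.1 v.2) (hv2 : ∀ v, val (Sum.inr v) = c v.1 v.2)
    (hmono : ∀ m n : ℕ, m ≤ n → lam (e n) ≤ lam (e m)) :
    Tendsto (fun n : ℕ => (Real.log n)⁻¹ * ∑ k ∈ Finset.range n, val (e k) * lam (e k))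
      atTop (𝓝 ((2 / h) * I)) := by
  have hlpos : ∀ v, 0 < lam v := by
    rintro (v | v)
    · rw [hl1]; exact hp _ _
    · rw [hl2]; exact hp _ _
  set T : ℕ → ℝ := fun n => -Real.log (lam (e n)) with hT
  have hexpT : ∀ n, Real.exp (-T n) = lam (e n) := fun n => by
    simp only [hT, neg_neg]; exact Real.exp_log (hlpos _)
  have hTlim : Tendsto T atTop atTop := by
    rw [tendsto_atTop]
    intro R
    have hfin := words_finite (p := fun v => p v.1 v.2) hκ (fun v => hp _ _) (fun v => hdec _ _) R
    have hfin2 : {v | Real.exp (-R) < lam v}.Finite := by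
      refine ((hfin.image Sum.inl).union (hfin.image Sum.inr)).subset ?_
      rintro (v | v) hv
      · left; refine ⟨v, ?_, rfl⟩
        change Real.exp (-R) < lam _ at hv
        rw [hl1] at hv; exact hv
      · right; refine ⟨v, ?_, rfl⟩
        change Real.exp (-R) < lam _ at hv
        rw [hl2] at hv; exact hv
    have hfin3 := hfin2.preimage (f := e) hbij.1.injOn
    have := hfin3.eventually_cofinite_notMem
    rw [Nat.cofinite_eq_atTop] at this
    filter_upwards [this] with n hn
    have hn : ¬ Real.exp (-R) < lam (e n) := hn
    rw [← hexpT, Real.exp_lt_exp] at hn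
    linarith
  set G1 : ℕ → Finset (Σ k : ℕ, Fin (k + 1) → 𝒜) :=
    fun n => ((Finset.range n).image e).toLeft with hG1
  set G2 : ℕ → Finset (Σ k : ℕ, Fin (k + 1) → 𝒜) :=
    fun n => ((Finset.range n).image e).toRight with hG2
  have hin : ∀ n v, Real.exp (-T n) < lam v → v ∈ (Finset.range n).image e := by
    intro n v hv
    obtain ⟨m, rfl⟩ := hbij.2 v
    rw [hexpT] at hv
    apply Finset.mem_image_of_mem
    rw [Finset.mem_range]
    by_contra hmn
    exact absurd (hmono n m (not_lt.1 hmn)) (not_le.2 hv)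
  have hout : ∀ n v, v ∈ (Finset.range n).image e → Real.exp (-T n) ≤ lam v := by
    intro n v hv
    obtain ⟨m, hm, rfl⟩ := Finset.mem_image.1 hv
    rw [hexpT]
    exact hmono m n (Finset.mem_range.1 hm).le
  have hG1a : ∀ n v, Real.exp (-T n) < p v.1 v.2 → v ∈ G1 n := fun n v hv => by
    rw [Finset.mem_toLeft]; exact hin n _ (by rw [hl1]; exact hv)
  have hG1b : ∀ n, ∀ v ∈ G1 n, Real.exp (-T n) ≤ p v.1 v.2 := fun n v hv => by
    rw [← hl1]; exact hout n _ (Finset.mem_toLeft.1 hv)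
  have hG2a : ∀ n v, Real.exp (-T n) < p v.1 v.2 → v ∈ G2 n := fun n v hv => by
    rw [Finset.mem_toRight]; exact hin n _ (by rw [hl2]; exact hv)
  have hG2b : ∀ n, ∀ v ∈ G2 n, Real.exp (-T n) ≤ p v.1 v.2 := fun n v hv => by
    rw [← hl2]; exact hout n _ (Finset.mem_toRight.1 hv)
  have hsum : ∀ n, ∑ k ∈ Finset.range n, val (e k) * lam (e k) =
      ∑ v ∈ G1 n, b v.1 v.2 * p v.1 v.2 + ∑ v ∈ G2 n, c v.1 v.2 * p v.1 v.2 := by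
    intro n
    rw [← Finset.sum_image (f := fun v => val v * lam v) (g := e) hbij.1.injOn,
      ← Finset.toLeft_disjSum_toRight (u := (Finset.range n).image e), Finset.sum_disjSum]
    simp only [hl1, hl2, hv1, hv2]
    simp [hG1, hG2]
  have hcardn : ∀ n : ℕ, (n : ℝ) = (G1 n).card + (G2 n).card := by
    intro n
    have : ((Finset.range n).image e).card = n := by
      rw [Finset.card_image_of_injective _ hbij.1, Finset.card_range]
    rw [← Finset.toLeft_disjSum_toRight (u := (Finset.range n).image e),
      Finset.card_disjSum] at this
    exact_mod_cast this.symm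
  set A : ℕ → ℝ := fun n => ∑ k ∈ Finset.range n, val (e k) * lam (e k) with hA
  have hAT : Tendsto (fun n => A n / T n) atTop (𝓝 (2 * (I / h))) := by
    apply tendsto_of_abs
    intro ε hε
    have k1 := hTlim.eventually (key (W := fun k => Fin (k + 1) → 𝒜) p hp h1 κ hκ hdec h hh hlln
      b B hb hB0 I hmb (ε / 2) (by positivity))
    have k2 := hTlim.eventually (key (W := fun k => Fin (k + 1) → 𝒜) p hp h1 κ hκ hdec h hh hlln
      c B hc hB0 I hmc (ε / 2) (by positivity))
    filter_upwards [k1, k2, hTlim.eventually_gt_atTop 0] with n h1 h2 hpos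
    have h1 := h1 (G1 n) (hG1a n) (hG1b n)
    have h2 := h2 (G2 n) (hG2a n) (hG2b n)
    have e1 : A n / T n - 2 * (I / h) = (A n - 2 * (T n * (I / h))) / T n := by
      field_simp
    rw [e1, abs_div, abs_of_pos hpos, div_le_iff₀ hpos]
    have e2 : A n = _ := hsum n
    rw [e2]
    rw [abs_le] at *
    constructor <;> linarith [h1.1, h1.2, h2.1, h2.2]
  have hlogT : Tendsto (fun n : ℕ => Real.log n / T n) atTop (𝓝 1) := by
    apply tendsto_of_abs
    intro ε hε
    have k1 := hTlim.eventually (key_card (W := fun k => Fin (k + 1) → 𝒜) p hp h1 κ hκ hdec h hh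
      hlln (ε / 2) (by positivity))
    filter_upwards [k1, hTlim.eventually_gt_atTop 0,
      hTlim.eventually_ge_atTop (Real.log 2 / (ε / 2)), eventually_gt_atTop 0] with n k1 hpos hlarge hn
    obtain ⟨u1, l1⟩ := k1 (G1 n) (hG1a n) (hG1b n)
    obtain ⟨u2, l2⟩ := k1 (G2 n) (hG2a n) (hG2b n)
    have hn' : (0 : ℝ) < n := by exact_mod_cast hn
    have hlo : (1 - ε / 2) * T n ≤ Real.log n := by
      rw [Real.le_log_iff_exp_le hn', hcardn n]
      have : (0 : ℝ) ≤ (G2 n).card := Nat.cast_nonneg _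
      linarith
    have hhi : Real.log n ≤ Real.log 2 + (1 + ε / 2) * T n := by
      rw [Real.log_le_iff_le_exp hn', Real.exp_add, Real.exp_log (by norm_num), hcardn n]
      linarith
    rw [div_le_iff₀ (by positivity)] at hlarge
    have e1 : Real.log n / T n - 1 = (Real.log n - T n) / T n := by field_simp
    rw [e1, abs_div, abs_of_pos hpos, div_le_iff₀ hpos, abs_le]
    have : 0 < ε * T n := by positivity
    constructor <;> linarith
  have hlim := hAT.div hlogT one_ne_zero
  have e0 : 2 * (I / h) / 1 = 2 / h * I := by ring
  rw [e0] at hlim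
  refine hlim.congr' ?_
  filter_upwards [hTlim.eventually_gt_atTop 0] with n hpos
  simp only [Pi.div_apply]
  rw [div_div_div_cancel_right₀ hpos.ne', div_eq_inv_mul]

/-- Dixmier trace representation, main theorem of Section 4.
For the unique `g`-measure `μ` of an `α`-Hölder `g`-function `log J`, a continuous `a : Ω → ℝ`
and any nonincreasing enumeration `((a_k, λ_k))_k` of the eigenvalue families
`{(a(wx), 𝕁(wx))} ⊔ {(a(wy), 𝕁(wx))}`,
`lim_n (1/log n) ∑_{k<n} a_k λ_k = (2/h_μ(σ)) ∫ a dμ`. -/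
theorem statement4 [Fintype 𝒜] [TopologicalSpace 𝒜] [DiscreteTopology 𝒜]
    [MeasurableSpace 𝒜] [BorelSpace 𝒜] (hcard : 2 ≤ Fintype.card 𝒜)
    (α : ℝ) (hα : α ∈ Set.Ioo (0 : ℝ) 1)
    (J : Omega 𝒜 → ℝ) (hJ : IsGFunction J)
    (hHolJ : IsHolderW α (fun z => Real.log (J z)))
    (μ : Measure (Omega 𝒜)) (hμ : IsGMeasure J μ)
    (huniq : ∀ ν : Measure (Omega 𝒜), IsGMeasure J ν → ν = μ)
    (x y : Omega 𝒜) (a : Omega 𝒜 → ℝ) (ha : Continuous a)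
    (e : ℕ → Words 𝒜 ⊕ Words 𝒜) (hbij : Function.Bijective e)
    (hmono : ∀ m n : ℕ, m ≤ n → wordLam J x (e n) ≤ wordLam J x (e m)) :
    Tendsto
      (fun n : ℕ => (Real.log n)⁻¹ * ∑ k ∈ Finset.range n, wordVal a x y (e k) * wordLam J x (e k))
      atTop (𝓝 ((2 / KSentropy μ) * ∫ z, a z ∂μ)) := by
  have hne : Nonempty 𝒜 := ⟨x 0⟩
  obtain ⟨hJc, hJpos, h1⟩ := hJ
  obtain ⟨K, hK1, hK⟩ := JBirk_distortion hα.1 hHolJ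
  obtain ⟨κ, hκ, hdec⟩ := exists_decay hcard hJc hJpos h1
  have hprob := hμ.1
  rw [entropy_eq hJc hJpos h1 hK1 hK hμ]
  have hh : 0 < -∫ z, Real.log (J z) ∂μ := by
    have := integral_mono (μ := μ) (integrable_cont (continuous_log hJc hJpos))
      (integrable_const (-κ)) hdec
    simp only [integral_const, probReal_univ, one_smul] at this
    linarith
  obtain ⟨B, hB⟩ := (isCompact_univ (X := Omega 𝒜)).exists_bound_of_continuousOn ha.continuousOn
  have hB : ∀ z, |a z| ≤ B := fun z => hB z (Set.mem_univ z)
  have hm1 : ∀ ε > 0, ∀ᶠ k : ℕ in atTop, |∑ w : Fin (k + 1) → 𝒜,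
      a (concat w x) * JBirk J (k + 1) w x - ∫ z, a z ∂μ| ≤ ε := by
    intro ε hε
    obtain ⟨N, hN⟩ := LL_unif hJc hJpos h1 hK1 hK hμ ha hε
    filter_upwards [eventually_ge_atTop N] with k hk
    have := hN (k + 1) (by omega) x
    rw [LL_iter hJpos] at this
    simpa only [mul_comm] using this
  have hm2 : ∀ ε > 0, ∀ᶠ k : ℕ in atTop, |∑ w : Fin (k + 1) → 𝒜,
      a (concat w y) * JBirk J (k + 1) w x - ∫ z, a z ∂μ| ≤ ε := by
    intro ε hε
    obtain ⟨N, hN⟩ := unif_cont ha (half_pos hε)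
    filter_upwards [eventually_ge_atTop N, hm1 (ε / 2) (half_pos hε)] with k hk h2
    have h3 : |∑ w : Fin (k + 1) → 𝒜, a (concat w y) * JBirk J (k + 1) w x -
        ∑ w : Fin (k + 1) → 𝒜, a (concat w x) * JBirk J (k + 1) w x| ≤ ε / 2 := by
      rw [← Finset.sum_sub_distrib]
      calc _ ≤ ∑ w : Fin (k + 1) → 𝒜, |a (concat w y) * JBirk J (k + 1) w x -
            a (concat w x) * JBirk J (k + 1) w x| := Finset.abs_sum_le_sum_abs _ _
        _ ≤ ∑ w : Fin (k + 1) → 𝒜, ε / 2 * JBirk J (k + 1) w x := by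
            apply Finset.sum_le_sum
            intro w _
            rw [← sub_mul, abs_mul, abs_of_pos (JBirk_pos _ _ _ _)]
            apply mul_le_mul_of_nonneg_right _ (JBirk_pos _ _ _ _).le
            exact hN _ _ fun i hi => concat_agree w y x i (by omega)
        _ = ε / 2 := by rw [← Finset.mul_sum, sum_JBirk hJpos h1, mul_one]
    rw [abs_le] at *
    constructor <;> linarith [h2.1, h2.2, h3.1, h3.2]
  refine final_abs (fun k w => JBirk J (k + 1) w x) (fun k w => JBirk_pos _ _ _ _)
    (fun k => sum_JBirk hJpos h1 _ _) κ hκ ?_ _ hh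
    (fun δ hδ => lln_words hJc hJpos h1 hK1 hK hμ x hδ)
    (fun k w => a (concat w x)) (fun k w => a (concat w y)) B ((abs_nonneg _).trans (hB x))
    (fun k w => hB _) (fun k w => hB _) _ (tendsto_of_abs hm1) (tendsto_of_abs hm2)
    e hbij (wordLam J x) (wordVal a x y) (fun _ => rfl) (fun _ => rfl) (fun _ => rfl)
    (fun _ => rfl) hmono
  intro k w
  have : Real.log (JBirk J (k + 1) w x) =
    birkhoff (fun z => Real.log (J z)) (k + 1) (concat w x) := Real.log_exp _
  rw [this, birkhoff]
  refine (Finset.sum_le_sum fun i _ => hdec _).trans ?_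
  simp only [Finset.sum_const, Finset.card_range, nsmul_eq_mul]
  push_cast
  linarith

end GS
end

section
/- Let (λ_k)_{k≥1} be a nonincreasing sequence of positive real numbers with Σ_{k≥1} λ_k^s < ∞ for every s>1, let (a_k)_{k≥1} be a bounded sequence of nonnegative real numbers, and let C∈ℝ. Then lim_{s→1⁺} (s−1) Σ_{k≥1} a_k λ_k^s = C if and only if lim_{n→∞} (1/log n) Σ_{k=1}^n a_k λ_k = C. -/
open Filter Topology

/-- counting function -/
noncomputable def Gf (w u : ℕ → ℝ) (x : ℝ) : ℝ := ∑' k, if -Real.log (u k) ≤ x then w k else 0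

lemma lin_iff {ι : Type*} {l : Filter ι} (f φ : ι → ℝ) (hφ : Tendsto φ l atTop) (C : ℝ) :
    Tendsto (fun i => (φ i)⁻¹ * f i) l (𝓝 C) ↔
      ∀ ε > 0, ∃ K : ℝ, ∀ᶠ i in l, |f i - C * φ i| ≤ ε * φ i + K := by
  constructor
  · intro h ε hε
    refine ⟨0, ?_⟩
    have := (Metric.tendsto_nhds.1 h) ε hε
    filter_upwards [this, hφ.eventually_gt_atTop 0] with i hi hp
    rw [Real.dist_eq] at hi
    have e : f i - C * φ i = ((φ i)⁻¹ * f i - C) * φ i := by field_simp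
    rw [e, abs_mul, abs_of_pos hp, add_zero]
    gcongr
  · intro h
    rw [Metric.tendsto_nhds]
    intro ε hε
    obtain ⟨K, hK⟩ := h (ε/2) (by positivity)
    filter_upwards [hK, hφ.eventually_gt_atTop 0, hφ.eventually_gt_atTop (K / (ε/2))] with i hi hp hk
    rw [Real.dist_eq]
    have e : (φ i)⁻¹ * f i - C = (f i - C * φ i) / φ i := by field_simp
    rw [e, abs_div, abs_of_pos hp, div_lt_iff₀ hp]
    rw [div_lt_iff₀ (by positivity)] at hk
    linarith

lemma G_summ (w u : ℕ → ℝ) (hu : ∀ k, 0 < u k) (hw : ∀ k, 0 ≤ w k)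
    (hs : ∀ d : ℝ, 0 < d → Summable (fun k => w k * u k ^ d)) (x : ℝ) :
    Summable (fun k => if -Real.log (u k) ≤ x then w k else 0) := by
  refine Summable.of_nonneg_of_le (fun k => ?_) (fun k => ?_) ((hs 1 one_pos).mul_left (Real.exp x))
  · split_ifs; exacts [hw k, le_rfl]
  · split_ifs with h
    · have : Real.exp (-x) ≤ u k := by
        rw [← Real.le_log_iff_exp_le (hu k)]; linarith
      have h2 : 1 ≤ Real.exp x * u k := by
        calc (1:ℝ) = Real.exp x * Real.exp (-x) := by rw [← Real.exp_add]; simp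
          _ ≤ _ := by gcongr
      rw [Real.rpow_one]
      nlinarith [hw k]
    · have := hw k; have := hu k; positivity

lemma G_mono (w u : ℕ → ℝ) (hu : ∀ k, 0 < u k) (hw : ∀ k, 0 ≤ w k)
    (hs : ∀ d : ℝ, 0 < d → Summable (fun k => w k * u k ^ d)) : Monotone (Gf w u) := by
  intro x y hxy
  refine Summable.tsum_le_tsum (fun k => ?_) (G_summ w u hu hw hs x) (G_summ w u hu hw hs y)
  have := hw k
  split_ifs <;> first | exact le_rfl | linarith

lemma G_nonneg (w u : ℕ → ℝ) (hw : ∀ k, 0 ≤ w k) (x : ℝ) : 0 ≤ Gf w u x := by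
  refine tsum_nonneg fun k => ?_
  split_ifs; exacts [hw k, le_rfl]

lemma C_nonneg {ι : Type*} {l : Filter ι} [l.NeBot] (f : ι → ℝ) (C : ℝ) (h : Tendsto f l (𝓝 C))
    (hf : ∀ᶠ i in l, 0 ≤ f i) : 0 ≤ C := ge_of_tendsto h hf

/-- polynomial test functions -/
lemma poly_tendsto (w u : ℕ → ℝ) (hu : ∀ k, 0 < u k)
    (hs : ∀ d : ℝ, 0 < d → Summable (fun k => w k * u k ^ d)) (C : ℝ)
    (hF : Tendsto (fun d : ℝ => d * ∑' k, w k * u k ^ d) (𝓝[>] 0) (𝓝 C)) (P : Polynomial ℝ) :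
    (∀ d : ℝ, 0 < d → Summable (fun k => w k * u k ^ d * P.eval (u k ^ d))) ∧
    Tendsto (fun d : ℝ => d * ∑' k, w k * u k ^ d * P.eval (u k ^ d)) (𝓝[>] 0)
      (𝓝 (C * ∫ t in (0:ℝ)..1, P.eval t)) := by
  induction P using Polynomial.induction_on' with
  | add p q hp hq =>
    refine ⟨fun d hd => ?_, ?_⟩
    · simpa [mul_add] using (hp.1 d hd).add (hq.1 d hd)
    · have := hp.2.add hq.2
      rw [← mul_add, ← intervalIntegral.integral_add (p.continuous.intervalIntegrable _ _)
        (q.continuous.intervalIntegrable _ _)] at this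
      simp only [Polynomial.eval_add]
      refine this.congr' ?_
      filter_upwards [self_mem_nhdsWithin] with d hd
      rw [← mul_add, ← (hp.1 d hd).tsum_add (hq.1 d hd)]
      simp [mul_add]
  | monomial n c =>
    have key : ∀ d : ℝ, ∀ k, w k * u k ^ d * (Polynomial.monomial n c).eval (u k ^ d)
        = c * (w k * u k ^ ((n+1:ℝ) * d)) := by
      intro d k
      rw [Polynomial.eval_monomial, ← Real.rpow_natCast (u k ^ d), ← Real.rpow_mul (hu k).le,
        show (n+1:ℝ)*d = d + d * n by ring, Real.rpow_add (hu k)]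
      ring
    simp only [key]
    refine ⟨fun d hd => (hs _ (by positivity)).mul_left _, ?_⟩
    have hn : (0:ℝ) < n + 1 := by positivity
    have ht : Tendsto (fun d : ℝ => (n+1:ℝ) * d) (𝓝[>] 0) (𝓝[>] 0) := by
      refine tendsto_nhdsWithin_iff.2 ⟨?_, ?_⟩
      · have : Tendsto (fun d : ℝ => (n+1:ℝ) * d) (𝓝 0) (𝓝 ((n+1:ℝ) * 0)) :=
          (continuous_const.mul continuous_id).tendsto 0
        rw [mul_zero] at this
        exact this.mono_left nhdsWithin_le_nhds
      · filter_upwards [self_mem_nhdsWithin] with d hd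
        exact mul_pos hn hd
    have := (hF.comp ht).const_mul (c / (n+1))
    have e : C * ∫ t in (0:ℝ)..1, (Polynomial.monomial n c).eval t = c / (n+1) * C := by
      simp [Polynomial.eval_monomial]
      field_simp
    rw [e]
    refine this.congr fun d => ?_
    simp only [Function.comp, tsum_mul_left]
    field_simp

lemma cont_tendsto (w u : ℕ → ℝ) (hu : ∀ k, 0 < u k) (hu1 : ∀ k, u k ≤ 1) (hw : ∀ k, 0 ≤ w k)
    (hs : ∀ d : ℝ, 0 < d → Summable (fun k => w k * u k ^ d)) (C : ℝ)
    (hF : Tendsto (fun d : ℝ => d * ∑' k, w k * u k ^ d) (𝓝[>] 0) (𝓝 C))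
    (h : ℝ → ℝ) (hc : Continuous h) (hsum : ∀ d : ℝ, 0 < d → Summable (fun k => w k * u k ^ d * h (u k ^ d))) :
    Tendsto (fun d : ℝ => d * ∑' k, w k * u k ^ d * h (u k ^ d)) (𝓝[>] 0)
      (𝓝 (C * ∫ t in (0:ℝ)..1, h t)) := by
  rw [Metric.tendsto_nhds]
  intro ε hε
  obtain ⟨η, hη, hηε⟩ : ∃ η > 0, η * (2 * |C| + 2) ≤ ε := by
    refine ⟨ε / (2 * |C| + 2), by positivity, le_of_eq ?_⟩
    have : 2 * |C| + 2 ≠ 0 := by positivity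
    field_simp
  obtain ⟨P, hP⟩ := exists_polynomial_near_of_continuousOn 0 1 h hc.continuousOn η hη
  obtain ⟨hPs, hPt⟩ := poly_tendsto w u hu hs C hF P
  have h1 := (Metric.tendsto_nhds.1 hPt) η hη
  have h2 := (Metric.tendsto_nhds.1 hF) 1 one_pos
  have h3 : |(∫ t in (0:ℝ)..1, P.eval t) - ∫ t in (0:ℝ)..1, h t| ≤ η := by
    rw [← intervalIntegral.integral_sub (P.continuous.intervalIntegrable _ _)
        (hc.intervalIntegrable _ _)]
    have := intervalIntegral.norm_integral_le_of_norm_le_const (a := (0:ℝ)) (b := 1)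
      (f := fun t => P.eval t - h t) (C := η) (fun x hx => by
        rw [Set.uIoc_of_le zero_le_one] at hx
        exact (hP x ⟨hx.1.le, hx.2⟩).le)
    simpa using this
  filter_upwards [h1, h2, self_mem_nhdsWithin] with d hd1 hd2 hd
  have hd : 0 < d := hd
  rw [Real.dist_eq] at *
  have h4 : |(∑' k, w k * u k ^ d * h (u k ^ d)) - ∑' k, w k * u k ^ d * P.eval (u k ^ d)|
      ≤ η * ∑' k, w k * u k ^ d := by
    rw [← (hsum d hd).tsum_sub (hPs d hd), ← tsum_mul_left, ← Real.norm_eq_abs]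
    refine tsum_of_norm_bounded ((hs d hd).mul_left η).hasSum fun k => ?_
    have hk : 0 ≤ w k * u k ^ d := mul_nonneg (hw k) (Real.rpow_nonneg (hu k).le _)
    rw [← mul_sub, norm_mul, Real.norm_of_nonneg hk, mul_comm, norm_sub_rev]
    gcongr
    exact (hP _ ⟨Real.rpow_nonneg (hu k).le _, Real.rpow_le_one (hu k).le (hu1 k) hd.le⟩).le
  have h5 : |d * (∑' k, w k * u k ^ d * h (u k ^ d)) - d * ∑' k, w k * u k ^ d * P.eval (u k ^ d)|
      ≤ η * (|C| + 1) := by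
    rw [← mul_sub, abs_mul, abs_of_pos hd]
    calc _ ≤ d * (η * ∑' k, w k * u k ^ d) := by gcongr
      _ = η * (d * ∑' k, w k * u k ^ d) := by ring
      _ ≤ _ := by
        gcongr
        have := (abs_lt.1 hd2).2
        have := le_abs_self C
        linarith
  have h6 : |C * (∫ t in (0:ℝ)..1, P.eval t) - C * ∫ t in (0:ℝ)..1, h t| ≤ |C| * η := by
    rw [← mul_sub, abs_mul]; gcongr
  rw [abs_lt] at hd1 ⊢
  rw [abs_le] at h5 h6
  constructor <;> nlinarith

lemma taub (w u : ℕ → ℝ) (hu : ∀ k, 0 < u k) (hu1 : ∀ k, u k ≤ 1) (hw : ∀ k, 0 ≤ w k)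
    (hs : ∀ d : ℝ, 0 < d → Summable (fun k => w k * u k ^ d)) (C : ℝ)
    (hF : Tendsto (fun d : ℝ => d * ∑' k, w k * u k ^ d) (𝓝[>] 0) (𝓝 C))
    (c e : ℝ) (hc : 0 ≤ c) (hce : c < e) :
    ∃ (I : ℝ) (T : ℝ → ℝ), c ≤ I ∧ I ≤ e ∧ Tendsto T (𝓝[>] 0) (𝓝 (C * I)) ∧
      ∀ d > 0, d * Gf w u (c / d) ≤ T d ∧ T d ≤ d * Gf w u (e / d) := by
  obtain ⟨a, ha⟩ : ∃ a, a = Real.exp (-e) := ⟨_, rfl⟩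
  obtain ⟨b, hb⟩ : ∃ b, b = Real.exp (-c) := ⟨_, rfl⟩
  have ha0 : 0 < a := ha ▸ Real.exp_pos _
  have hb0 : 0 < b := hb ▸ Real.exp_pos _
  have hab : a < b := by rw [ha, hb]; exact Real.exp_lt_exp.2 (by linarith)
  have hb1 : b ≤ 1 := by rw [hb]; exact Real.exp_le_one_iff.2 (by linarith)
  have hba : 0 < b - a := by linarith
  obtain ⟨φ, hφ⟩ : ∃ φ : ℝ → ℝ, φ = fun t => max 0 (min 1 ((t - a) / (b - a))) := ⟨_, rfl⟩
  obtain ⟨h, hh⟩ : ∃ h : ℝ → ℝ, h = fun t => φ t / max t a := ⟨_, rfl⟩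
  have φc : Continuous φ := by rw [hφ]; fun_prop
  have hcont : Continuous h := by
    rw [hh]
    exact φc.div (by fun_prop) fun t => (lt_of_lt_of_le ha0 (le_max_right _ _)).ne'
  have φ0 : ∀ t, 0 ≤ φ t := fun t => by rw [hφ]; exact le_max_left _ _
  have φ1 : ∀ t, φ t ≤ 1 := fun t => by
    rw [hφ]; exact max_le zero_le_one (min_le_left _ _)
  have φa : ∀ t ≤ a, φ t = 0 := fun t ht => by
    rw [hφ]; exact max_eq_left ((min_le_right _ _).trans
      (div_nonpos_of_nonpos_of_nonneg (by linarith) hba.le))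
  have φb : ∀ t ≥ b, φ t = 1 := fun t ht => by
    have : 1 ≤ (t - a) / (b - a) := by rw [le_div_iff₀ hba]; linarith
    rw [hφ]; simp [min_eq_left this]
  have th : ∀ t, 0 < t → t * h t = φ t := by
    intro t ht
    rw [hh]
    rcases le_total t a with h1 | h1
    · simp [φa t h1]
    · simp only [max_eq_left h1]; field_simp
  have h0 : ∀ t, 0 ≤ h t := fun t => by
    rw [hh]; exact div_nonneg (φ0 t) (ha0.le.trans (le_max_right _ _))
  have hII : ∀ x y : ℝ, IntervalIntegrable h MeasureTheory.volume x y :=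
    fun x y => hcont.intervalIntegrable _ _
  have hinv : ∀ x : ℝ, 0 < x → x ≤ 1 → IntervalIntegrable (fun t : ℝ => t⁻¹) MeasureTheory.volume x 1 := by
    intro x hx hx1
    apply ContinuousOn.intervalIntegrable
    rw [Set.uIcc_of_le hx1]
    exact ContinuousOn.inv₀ continuousOn_id fun t ht => (hx.trans_le ht.1).ne'
  have hval : ∀ x : ℝ, 0 < x → ∫ t in x..1, t⁻¹ = - Real.log x := by
    intro x hx
    rw [integral_inv_of_pos hx one_pos]; simp
  have eqk : ∀ d : ℝ, ∀ k, w k * u k ^ d * h (u k ^ d) = w k * φ (u k ^ d) := by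
    intro d k; rw [mul_assoc, th _ (Real.rpow_pos_of_pos (hu k) d)]
  have cmp1 : ∀ d : ℝ, 0 < d → ∀ k, w k * φ (u k ^ d) ≤ if -Real.log (u k) ≤ e / d then w k else 0 := by
    intro d hd k
    split_ifs with hk
    · exact mul_le_of_le_one_right (hw k) (φ1 _)
    · rw [φa, mul_zero]
      rw [Real.rpow_def_of_pos (hu k), ha, Real.exp_le_exp]
      rw [not_le, div_lt_iff₀ hd] at hk
      linarith
  have cmp2 : ∀ d : ℝ, 0 < d → ∀ k, (if -Real.log (u k) ≤ c / d then w k else 0) ≤ w k * φ (u k ^ d) := by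
    intro d hd k
    split_ifs with hk
    · rw [φb, mul_one]
      rw [Real.rpow_def_of_pos (hu k), hb, ge_iff_le, Real.exp_le_exp]
      rw [le_div_iff₀ hd] at hk
      linarith
    · exact mul_nonneg (hw k) (φ0 _)
  have hsm : ∀ d : ℝ, 0 < d → Summable fun k => w k * φ (u k ^ d) := fun d hd =>
    Summable.of_nonneg_of_le (fun k => mul_nonneg (hw k) (φ0 _)) (cmp1 d hd) (G_summ w u hu hw hs _)
  have main := cont_tendsto w u hu hu1 hw hs C hF h hcont (fun d hd => by
    simp only [eqk]; exact hsm d hd)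
  refine ⟨_, _, ?_, ?_, main, ?_⟩
  · rw [← intervalIntegral.integral_add_adjacent_intervals (hII 0 b) (hII b 1)]
    have i1 : 0 ≤ ∫ t in (0:ℝ)..b, h t := intervalIntegral.integral_nonneg hb0.le fun t _ => h0 t
    have i2 : ∫ t in b..1, t⁻¹ ≤ ∫ t in b..1, h t := by
      refine intervalIntegral.integral_mono_on hb1 (hinv b hb0 hb1) (hII _ _) fun t ht => ?_
      have ht0 := hb0.trans_le ht.1
      have := th t ht0
      rw [φb t ht.1] at this
      rw [inv_le_iff_one_le_mul₀' ht0]; exact this.ge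
    rw [hval b hb0, hb, Real.log_exp, ← hb] at i2
    linarith
  · rw [← intervalIntegral.integral_add_adjacent_intervals (hII 0 a) (hII a 1)]
    have i1 : ∫ t in (0:ℝ)..a, h t = 0 := by
      rw [intervalIntegral.integral_congr (g := fun _ => 0)]
      · simp
      · intro t ht
        rw [Set.uIcc_of_le ha0.le] at ht
        simp [hh, φa t ht.2]
    have i2 : ∫ t in a..1, h t ≤ ∫ t in a..1, t⁻¹ := by
      refine intervalIntegral.integral_mono_on (hab.le.trans hb1) (hII _ _)
        (hinv a ha0 (hab.le.trans hb1)) fun t ht => ?_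
      have ht0 := ha0.trans_le ht.1
      have := th t ht0
      rw [← one_div, le_div_iff₀ ht0, mul_comm, this]
      exact φ1 t
    rw [hval a ha0, ha, Real.log_exp] at i2
    rw [← ha] at i2
    linarith
  · intro d hd
    simp only [eqk]
    constructor
    · gcongr
      exact Summable.tsum_le_tsum (cmp2 d hd) (G_summ w u hu hw hs _) (hsm d hd)
    · gcongr
      exact Summable.tsum_le_tsum (cmp1 d hd) (hsm d hd) (G_summ w u hu hw hs _)

lemma taub' (w u : ℕ → ℝ) (hu : ∀ k, 0 < u k) (hu1 : ∀ k, u k ≤ 1) (hw : ∀ k, 0 ≤ w k)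
    (hs : ∀ d : ℝ, 0 < d → Summable (fun k => w k * u k ^ d)) (C : ℝ)
    (hF : Tendsto (fun d : ℝ => d * ∑' k, w k * u k ^ d) (𝓝[>] 0) (𝓝 C)) :
    Tendsto (fun x : ℝ => x⁻¹ * Gf w u x) atTop (𝓝 C) := by
  have hC : 0 ≤ C := by
    refine C_nonneg _ C hF ?_
    filter_upwards [self_mem_nhdsWithin] with d hd
    exact mul_nonneg (le_of_lt hd) (tsum_nonneg fun k => mul_nonneg (hw k) (Real.rpow_nonneg (hu k).le _))
  rw [Metric.tendsto_nhds]
  intro ε hε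
  obtain ⟨η, hη, hη1, hηε⟩ : ∃ η > 0, η ≤ 1 ∧ η * (C + 1) ≤ ε := by
    refine ⟨min 1 (ε / (C + 1)), by positivity, min_le_left _ _, ?_⟩
    rw [← le_div_iff₀ (by positivity)]; exact min_le_right _ _
  obtain ⟨I, T, hI1, hI2, hT, hTb⟩ := taub w u hu hu1 hw hs C hF 1 (1+η) zero_le_one (by linarith)
  obtain ⟨J, R, hJ1, hJ2, hR, hRb⟩ := taub w u hu hu1 hw hs C hF (1-η) 1 (by linarith) (by linarith)
  have hinv := tendsto_inv_atTop_nhdsGT_zero (𝕜 := ℝ)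
  have e1 := hinv.eventually ((Metric.tendsto_nhds.1 hT) η hη)
  have e2 := hinv.eventually ((Metric.tendsto_nhds.1 hR) η hη)
  filter_upwards [e1, e2, eventually_gt_atTop 0] with x h1 h2 hx
  have hx' : 0 < x⁻¹ := by positivity
  have t1 := (hTb _ hx').1
  have t2 := (hRb _ hx').2
  rw [one_div, inv_inv] at t1 t2
  rw [Real.dist_eq, abs_lt] at *
  constructor <;> nlinarith

open MeasureTheory in
lemma abel (w u : ℕ → ℝ) (hu : ∀ k, 0 < u k) (hu1 : ∀ k, u k ≤ 1) (hw : ∀ k, 0 ≤ w k)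
    (hs : ∀ d : ℝ, 0 < d → Summable (fun k => w k * u k ^ d)) (d : ℝ) (hd : 0 < d) :
    ∑' k, w k * u k ^ d = ∫ x in Set.Ioi (0:ℝ), Gf w u x * (d * Real.exp (-d * x)) := by
  obtain ⟨F, hF⟩ : ∃ F : ℕ → ℝ → ℝ, F = fun k => (Set.Ici (-Real.log (u k))).indicator
    fun x => w k * (d * Real.exp (-d * x)) := ⟨_, rfl⟩
  have hFi : ∀ k, Integrable (F k) := by
    intro k
    rw [hF]
    rw [integrable_indicator_iff measurableSet_Ici, integrableOn_Ici_iff_integrableOn_Ioi]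
    exact ((integrableOn_exp_mul_Ioi (by linarith) _).const_mul d).const_mul (w k)
  have hFv : ∀ k, ∫ x, F k x = w k * u k ^ d := by
    intro k
    rw [hF]
    simp only
    rw [integral_indicator measurableSet_Ici, integral_Ici_eq_integral_Ioi, integral_const_mul,
      integral_const_mul, integral_exp_mul_Ioi (by linarith), Real.rpow_def_of_pos (hu k)]
    rw [show -d * -Real.log (u k) = Real.log (u k) * d by ring]
    field_simp
  have hF0 : ∀ k x, 0 ≤ F k x := by
    intro k x; rw [hF]
    refine Set.indicator_nonneg (fun x _ => ?_) x
    have := hw k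
    positivity
  have hFn : ∀ k, ∫ x, ‖F k x‖ = w k * u k ^ d := by
    intro k; rw [← hFv k]; congr 1; ext x; rw [Real.norm_of_nonneg (hF0 k x)]
  have key := hasSum_integral_of_summable_integral_norm hFi (by simpa only [hFn] using hs d hd)
  simp only [hFv] at key
  rw [key.tsum_eq]
  have e : ∀ x, ∑' k, F k x = Gf w u x * (d * Real.exp (-d * x)) := by
    intro x
    rw [Gf, ← tsum_mul_right]
    refine tsum_congr fun k => ?_
    simp only [hF, Set.indicator, Set.mem_Ici]
    split_ifs <;> simp
  simp only [e]
  rw [← integral_Ici_eq_integral_Ioi]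
  refine (setIntegral_eq_integral_of_forall_compl_eq_zero fun x hx => ?_).symm
  rw [Set.mem_Ici, not_le] at hx
  rw [Gf, tsum_congr (g := fun _ => (0:ℝ))]
  · simp
  · intro k
    rw [if_neg]
    have := Real.log_nonpos (hu k).le (hu1 k)
    linarith

open MeasureTheory in
lemma abel' (w u : ℕ → ℝ) (hu : ∀ k, 0 < u k) (hu1 : ∀ k, u k ≤ 1) (hw : ∀ k, 0 ≤ w k)
    (hs : ∀ d : ℝ, 0 < d → Summable (fun k => w k * u k ^ d)) (C : ℝ)
    (hG : Tendsto (fun x : ℝ => x⁻¹ * Gf w u x) atTop (𝓝 C)) :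
    Tendsto (fun d : ℝ => d * ∑' k, w k * u k ^ d) (𝓝[>] 0) (𝓝 C) := by
  rw [lin_iff (Gf w u) (fun x => x) tendsto_id] at hG
  rw [Metric.tendsto_nhds]
  intro ε hε
  obtain ⟨K, hK⟩ := hG (ε/2) (by positivity)
  obtain ⟨X, hX⟩ := eventually_atTop.1 hK
  obtain ⟨B, hB0, hB⟩ : ∃ B, 0 < B ∧ ∀ x, 0 < x → |Gf w u x - C * x| ≤ ε / 2 * x + B := by
    refine ⟨|K| + Gf w u X + |C| * |X| + 1, ?_, ?_⟩
    · have := G_nonneg w u hw X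
      positivity
    · intro x hx
      have := G_nonneg w u hw X
      rcases le_total X x with h | h
      · have := hX x h
        have := le_abs_self K
        have : 0 ≤ |C| * |X| := by positivity
        linarith
      · have h1 := G_mono w u hu hw hs h
        have h2 := G_nonneg w u hw x
        have h3 : |C * x| ≤ |C| * |X| := by
          rw [abs_mul]
          have : |x| ≤ |X| := by rw [abs_of_pos hx]; exact h.trans (le_abs_self _)
          gcongr
        have h4 := abs_sub (Gf w u x) (C * x)
        rw [abs_of_nonneg h2] at h4
        have := abs_nonneg K
        have : 0 < ε / 2 * x := by positivity
        linarith
  have hsmall : ∀ᶠ d : ℝ in 𝓝[>] 0, d < ε / 2 / B :=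
    (eventually_lt_nhds (by positivity)).filter_mono nhdsWithin_le_nhds
  filter_upwards [hsmall, self_mem_nhdsWithin] with d hd1 hd
  have hd : 0 < d := hd
  rw [lt_div_iff₀ hB0] at hd1
  have i0 : IntegrableOn (fun x : ℝ => Real.exp (-d * x)) (Set.Ioi 0) :=
    integrableOn_exp_mul_Ioi (by linarith) _
  have v0 : ∫ x in Set.Ioi (0:ℝ), Real.exp (-d * x) = 1 / d := by
    rw [integral_exp_mul_Ioi (by linarith)]; simp
  have v1 : ∫ x in Set.Ioi (0:ℝ), x * Real.exp (-d * x) = 1 / d ^ 2 := by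
    have := Real.integral_rpow_mul_exp_neg_mul_Ioi (a := 2) two_pos hd
    norm_num [Real.Gamma_two] at this
    simpa using this
  have i1 : IntegrableOn (fun x : ℝ => x * Real.exp (-d * x)) (Set.Ioi 0) :=
    .of_integral_ne_zero (by rw [v1]; positivity)
  have ib : IntegrableOn (fun x : ℝ => (ε / 2 * d) * (x * Real.exp (-d * x)) + (B * d) * Real.exp (-d * x)) (Set.Ioi 0) :=
    (i1.const_mul _).add (i0.const_mul _)
  have hle : ∀ᵐ x ∂(volume.restrict (Set.Ioi (0:ℝ))), ‖(Gf w u x - C * x) * (d * Real.exp (-d * x))‖ ≤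
      (ε / 2 * d) * (x * Real.exp (-d * x)) + (B * d) * Real.exp (-d * x) := by
    filter_upwards [ae_restrict_mem measurableSet_Ioi] with x hx
    have hp : 0 < d * Real.exp (-d * x) := by positivity
    rw [norm_mul, Real.norm_of_nonneg hp.le, Real.norm_eq_abs]
    calc _ ≤ (ε / 2 * x + B) * (d * Real.exp (-d * x)) := by
          gcongr
          exact hB x hx
      _ = _ := by ring
  have id : IntegrableOn (fun x => (Gf w u x - C * x) * (d * Real.exp (-d * x))) (Set.Ioi 0) := by
    refine Integrable.mono' ib ?_ hle
    have := (G_mono w u hu hw hs).measurable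
    exact Measurable.aestronglyMeasurable (by fun_prop)
  have ic : IntegrableOn (fun x : ℝ => (C * d) * (x * Real.exp (-d * x))) (Set.Ioi 0) :=
    i1.const_mul _
  have hb := norm_integral_le_of_norm_le ib hle
  rw [integral_add (i1.const_mul _) (i0.const_mul _), integral_const_mul, integral_const_mul,
    v0, v1] at hb
  have hsp : ∑' k, w k * u k ^ d = (∫ x in Set.Ioi (0:ℝ), (Gf w u x - C * x) * (d * Real.exp (-d * x)))
      + C * d * (1 / d ^ 2) := by
    rw [abel w u hu hu1 hw hs d hd, ← v1, ← integral_const_mul, ← integral_add id ic]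
    congr 1; ext x; ring
  rw [hsp, Real.dist_eq]
  rw [Real.norm_eq_abs] at hb
  have e2 : ∀ y : ℝ, d * (y + C * d * (1 / d ^ 2)) - C = d * y := by
    intro y; field_simp <;> ring
  rw [e2, abs_mul, abs_of_pos hd]
  calc _ ≤ d * (ε / 2 * d * (1 / d ^ 2) + B * d * (1 / d)) := by gcongr
    _ = ε / 2 + d * B := by field_simp
    _ < ε := by linarith

section bridge

variable (lam : ℕ → ℝ) (a : ℕ → ℝ) (M : ℝ)

lemma S_le (hpos : ∀ k, 0 < lam k) (ha0 : ∀ k, 0 ≤ a k) (hM0 : 0 ≤ M) (hM : ∀ k, a k ≤ M)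
    (hs : ∀ d : ℝ, 0 < d → Summable (fun k => a k * lam k * lam k ^ d)) (n : ℕ) (hn : 1 ≤ n) :
    ∑ k ∈ Finset.range n, a k * lam k ≤ Gf (fun k => a k * lam k) lam (Real.log n) + M := by
  have hw : ∀ k, 0 ≤ a k * lam k := fun k => mul_nonneg (ha0 k) (hpos k).le
  have hn0 : (0:ℝ) < n := by exact_mod_cast hn
  have h1 : ∑ k ∈ Finset.range n, (if -Real.log (lam k) ≤ Real.log n then a k * lam k else 0)
      ≤ Gf (fun k => a k * lam k) lam (Real.log n) :=
    (G_summ (fun k => a k * lam k) lam hpos hw hs (Real.log n)).sum_le_tsum _ (fun k _ => by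
      split_ifs; exacts [hw k, le_rfl])
  have h2 : ∑ k ∈ Finset.range n, a k * lam k ≤
      ∑ k ∈ Finset.range n, ((if -Real.log (lam k) ≤ Real.log n then a k * lam k else 0) + M / n) := by
    refine Finset.sum_le_sum fun k _ => ?_
    split_ifs with h
    · have : 0 ≤ M / n := by positivity
      linarith
    · rw [not_le, lt_neg, ← Real.log_inv, Real.log_lt_log_iff (hpos k) (by positivity)] at h
      rw [zero_add, div_eq_mul_inv]
      exact mul_le_mul (hM k) h.le (hpos k).le hM0
  rw [Finset.sum_add_distrib] at h2
  simp only [Finset.sum_const, Finset.card_range, nsmul_eq_mul] at h2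
  have : (n:ℝ) * (M / n) = M := by field_simp
  linarith

lemma G_le (hpos : ∀ k, 0 < lam k) (hmono : ∀ m n : ℕ, m ≤ n → lam n ≤ lam m)
    (ha0 : ∀ k, 0 ≤ a k) (hsum : ∀ s : ℝ, 1 < s → Summable (fun k => lam k ^ s))
    (η : ℝ) (hη : 0 < η) :
    ∃ L : ℝ, 0 ≤ L ∧ ∀ (x : ℝ) (n : ℕ), 1 ≤ n → (1 + η) * x + L ≤ Real.log n →
      Gf (fun k => a k * lam k) lam x ≤ ∑ k ∈ Finset.range n, a k * lam k := by
  have hw : ∀ k, 0 ≤ a k * lam k := fun k => mul_nonneg (ha0 k) (hpos k).le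
  obtain ⟨Z, hZ⟩ : ∃ Z, Z = ∑' k, lam k ^ (1 + η) := ⟨_, rfl⟩
  have hsm := hsum (1 + η) (by linarith)
  refine ⟨Real.log (max 1 Z), Real.log_nonneg (le_max_left _ _), ?_⟩
  intro x n hn hx
  have hsub : ∀ k, -Real.log (lam k) ≤ x → k < n := by
    intro k hk
    have hb : (k + 1 : ℝ) * lam k ^ (1 + η) ≤ Z := by
      have h1 : ∑ j ∈ Finset.range (k+1), lam j ^ (1 + η) ≤ Z := by
        rw [hZ]
        exact hsm.sum_le_tsum _ fun j _ => Real.rpow_nonneg (hpos j).le _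
      have h2 : ∑ j ∈ Finset.range (k+1), lam k ^ (1 + η) ≤ ∑ j ∈ Finset.range (k+1), lam j ^ (1 + η) := by
        refine Finset.sum_le_sum fun j hj => ?_
        exact Real.rpow_le_rpow (hpos k).le (hmono j k (by simpa [Nat.lt_succ_iff] using hj)) (by linarith)
      simp only [Finset.sum_const, Finset.card_range, nsmul_eq_mul] at h2
      push_cast at h2
      linarith
    have hp : 0 < lam k ^ (1 + η) := Real.rpow_pos_of_pos (hpos k) _
    have hk1 : (0:ℝ) < k + 1 := by positivity
    have h3 := Real.log_le_log (by positivity) (hb.trans (le_max_right 1 Z))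
    rw [Real.log_mul hk1.ne' hp.ne', Real.log_rpow (hpos k)] at h3
    have h4 : Real.log (k + 1) ≤ Real.log n := by nlinarith
    rw [Real.log_le_log_iff hk1 (by exact_mod_cast hn)] at h4
    exact_mod_cast h4
  rw [Gf, tsum_eq_sum (s := Finset.range n)]
  · refine Finset.sum_le_sum fun k _ => ?_
    split_ifs; exacts [le_rfl, hw k]
  · intro k hk
    rw [if_neg]
    intro h
    exact hk (Finset.mem_range.2 (hsub k h))

lemma bridge (hpos : ∀ k, 0 < lam k) (hmono : ∀ m n : ℕ, m ≤ n → lam n ≤ lam m)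
    (hsum : ∀ s : ℝ, 1 < s → Summable (fun k => lam k ^ s))
    (ha0 : ∀ k, 0 ≤ a k) (hM0 : 0 ≤ M) (hM : ∀ k, a k ≤ M)
    (hs : ∀ d : ℝ, 0 < d → Summable (fun k => a k * lam k * lam k ^ d)) (C : ℝ) :
    Tendsto (fun x : ℝ => x⁻¹ * Gf (fun k => a k * lam k) lam x) atTop (𝓝 C) ↔
      Tendsto (fun n : ℕ => (Real.log n)⁻¹ * ∑ k ∈ Finset.range n, a k * lam k) atTop (𝓝 C) := by
  have hw : ∀ k, 0 ≤ a k * lam k := fun k => mul_nonneg (ha0 k) (hpos k).le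
  have hlog : Tendsto (fun n : ℕ => Real.log n) atTop atTop :=
    Real.tendsto_log_atTop.comp tendsto_natCast_atTop_atTop
  constructor
  · intro h
    have hC : 0 ≤ C := by
      refine C_nonneg _ C h ?_
      filter_upwards [eventually_gt_atTop 0] with x hx
      exact mul_nonneg (by positivity) (G_nonneg _ _ hw x)
    rw [lin_iff _ (fun x => x) tendsto_id] at h
    rw [lin_iff _ _ hlog]
    intro ε hε
    obtain ⟨η, hη, hηε⟩ : ∃ η > 0, η * (C + 1) = ε := ⟨ε / (C + 1), by positivity, by field_simp⟩
    obtain ⟨K, hK⟩ := h η hη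
    obtain ⟨L, hL0, hL⟩ := G_le lam a hpos hmono ha0 hsum η hη
    have hx : Tendsto (fun n : ℕ => (Real.log n - L) / (1 + η)) atTop atTop :=
      (tendsto_atTop_add_const_right _ (-L) hlog).atTop_div_const (by positivity)
    refine ⟨|K| + M + (C + η) * L, ?_⟩
    filter_upwards [hlog.eventually hK, hx.eventually hK, hx.eventually_ge_atTop 0, eventually_ge_atTop 1,
      hlog.eventually_ge_atTop 0] with n h1 h2 h3 hn hl0
    have s1 := S_le lam a M hpos ha0 hM0 hM hs n hn
    obtain ⟨x, hxd⟩ : ∃ x, x = (Real.log n - L) / (1 + η) := ⟨_, rfl⟩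
    rw [← hxd] at h2 h3
    have hx1 : (1 + η) * x = Real.log n - L := by rw [hxd]; field_simp
    have s2 := hL x n hn (by linarith)
    have hKK := le_abs_self K
    have hKn := abs_nonneg K
    have hxl : x ≤ Real.log n := by nlinarith
    have hCx : C * Real.log n - C * x = C * η * x + C * L := by
      have : Real.log n = (1 + η) * x + L := by linarith
      rw [this]; ring
    have hCe : C * η * x ≤ C * η * Real.log n := by gcongr
    have hee : η * x ≤ η * Real.log n := by gcongr
    have p1 : 0 ≤ C * L := by positivity
    have p2 : 0 ≤ η * L := by positivity
    have p3 : 0 ≤ C * η * Real.log n := by positivity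
    have e1 : ε * Real.log n = C * η * Real.log n + η * Real.log n := by rw [← hηε]; ring
    rw [abs_le] at *
    constructor <;> linarith
  · intro h
    have hC : 0 ≤ C := by
      refine C_nonneg _ C h ?_
      filter_upwards [hlog.eventually_gt_atTop 0] with x hx
      exact mul_nonneg (by positivity) (Finset.sum_nonneg fun k _ => hw k)
    rw [lin_iff _ _ hlog] at h
    rw [lin_iff _ (fun x => x) tendsto_id]
    intro ε hε
    obtain ⟨η, hη, hη1, hηε⟩ : ∃ η > 0, η ≤ 1 ∧ η * (C + 2) ≤ ε := by
      refine ⟨min 1 (ε / (C + 2)), by positivity, min_le_left _ _, ?_⟩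
      rw [← le_div_iff₀ (by positivity)]; exact min_le_right _ _
    obtain ⟨K, hK⟩ := h η hη
    obtain ⟨L, hL0, hL⟩ := G_le lam a hpos hmono ha0 hsum η hη
    have t1 : Tendsto (fun x : ℝ => ⌊Real.exp x⌋₊) atTop atTop :=
      tendsto_nat_floor_atTop.comp Real.tendsto_exp_atTop
    have t2 : Tendsto (fun x : ℝ => ⌈Real.exp ((1 + η) * x + L)⌉₊) atTop atTop :=
      tendsto_nat_ceil_atTop.comp (Real.tendsto_exp_atTop.comp
        (tendsto_atTop_add_const_right _ _ (tendsto_id.const_mul_atTop (by positivity))))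
    refine ⟨|K| + M + (C + η) * (L + Real.log 2), ?_⟩
    filter_upwards [t1.eventually hK, t2.eventually hK, t1.eventually_ge_atTop 1,
      t2.eventually_ge_atTop 1, eventually_ge_atTop 0] with x h1 h2 n1 n2 hx
    obtain ⟨n, hn⟩ : ∃ n, n = ⌊Real.exp x⌋₊ := ⟨_, rfl⟩
    obtain ⟨m, hm⟩ : ∃ m, m = ⌈Real.exp ((1 + η) * x + L)⌉₊ := ⟨_, rfl⟩
    rw [← hn] at h1 n1
    rw [← hm] at h2 n2
    have n0 : (0:ℝ) < n := by exact_mod_cast n1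
    have m0 : (0:ℝ) < m := by exact_mod_cast n2
    have hnx : Real.log n ≤ x := by
      rw [Real.log_le_iff_le_exp n0, hn]; exact Nat.floor_le (Real.exp_pos x).le
    have hnx' : x ≤ Real.log n + Real.log 2 := by
      rw [← Real.log_mul n0.ne' two_ne_zero, Real.le_log_iff_exp_le (by positivity)]
      have := Nat.lt_floor_add_one (Real.exp x)
      rw [← hn] at this
      have : (1:ℝ) ≤ n := by exact_mod_cast n1
      linarith
    have hmx : (1 + η) * x + L ≤ Real.log m := by
      rw [Real.le_log_iff_exp_le m0, hm]; exact Nat.le_ceil _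
    have hmx' : Real.log m ≤ (1 + η) * x + L + Real.log 2 := by
      have := Nat.ceil_lt_add_one (Real.exp_pos ((1 + η) * x + L)).le
      rw [← hm] at this
      have h1e : 1 ≤ Real.exp ((1 + η) * x + L) := Real.one_le_exp (by positivity)
      rw [Real.log_le_iff_le_exp m0, Real.exp_add _ (Real.log 2), Real.exp_log two_pos]
      linarith
    have s1 := S_le lam a M hpos ha0 hM0 hM hs n n1
    have s1' := G_mono _ lam hpos hw hs hnx
    have s2 := hL x m n2 hmx
    have hKK := le_abs_self K
    have hKn := abs_nonneg K
    have l2 : 0 ≤ Real.log 2 := Real.log_nonneg one_le_two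
    have q1 : C * x ≤ C * (Real.log n + Real.log 2) := by gcongr
    have q2 : C * Real.log m ≤ C * ((1 + η) * x + L + Real.log 2) := by gcongr
    have q3 : η * Real.log n ≤ η * x := by gcongr
    have q4 : η * Real.log m ≤ η * ((1 + η) * x + L + Real.log 2) := by gcongr
    have q5 : η * (C + 2) * x ≤ ε * x := by gcongr
    have q6 : η * η * x ≤ 1 * η * x := by gcongr
    have p1 : 0 ≤ C * L := by positivity
    have p2 : 0 ≤ η * L := by positivity
    have p3 : 0 ≤ η * Real.log 2 := by positivity
    have p4 : 0 ≤ C * η * x := by positivity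
    have p5 : 0 ≤ η * x := by positivity
    rw [abs_le] at *
    constructor <;> linarith

end bridge

lemma main1 (lam : ℕ → ℝ) (hpos : ∀ k, 0 < lam k) (hle : ∀ k, lam k ≤ 1)
    (hmono : ∀ m n : ℕ, m ≤ n → lam n ≤ lam m)
    (hsum : ∀ s : ℝ, 1 < s → Summable (fun k => lam k ^ s))
    (a : ℕ → ℝ) (ha0 : ∀ k, 0 ≤ a k) (hbd : ∃ M : ℝ, ∀ k, a k ≤ M) (C : ℝ) :
    Tendsto (fun s : ℝ => (s - 1) * ∑' k : ℕ, a k * lam k ^ s) (𝓝[>] (1 : ℝ)) (𝓝 C) ↔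
      Tendsto (fun n : ℕ => (Real.log n)⁻¹ * ∑ k ∈ Finset.range n, a k * lam k)
        atTop (𝓝 C) := by
  obtain ⟨M, hM⟩ := hbd
  have hM0 : 0 ≤ M := (ha0 0).trans (hM 0)
  have hw : ∀ k, 0 ≤ a k * lam k := fun k => mul_nonneg (ha0 k) (hpos k).le
  have e : ∀ (d : ℝ) k, a k * lam k * lam k ^ d = a k * lam k ^ (1 + d) := by
    intro d k; rw [Real.rpow_add (hpos k), Real.rpow_one, mul_assoc]
  have hs : ∀ d : ℝ, 0 < d → Summable (fun k => a k * lam k * lam k ^ d) := by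
    intro d hd
    refine Summable.of_nonneg_of_le (fun k => mul_nonneg (hw k) (Real.rpow_nonneg (hpos k).le _))
      (fun k => ?_) ((hsum (1 + d) (by linarith)).mul_left M)
    rw [e]
    exact mul_le_mul_of_nonneg_right (hM k) (Real.rpow_nonneg (hpos k).le _)
  rw [← bridge lam a M hpos hmono hsum ha0 hM0 hM hs C]
  have h1 : Tendsto (fun s : ℝ => (s - 1) * ∑' k : ℕ, a k * lam k ^ s) (𝓝[>] (1 : ℝ)) (𝓝 C) ↔
      Tendsto (fun d : ℝ => d * ∑' k, a k * lam k * lam k ^ d) (𝓝[>] 0) (𝓝 C) := by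
    simp only [e]
    have up : Tendsto (fun d : ℝ => 1 + d) (𝓝[>] 0) (𝓝[>] 1) := by
      refine tendsto_nhdsWithin_iff.2 ⟨?_, ?_⟩
      · have : Tendsto (fun d : ℝ => 1 + d) (𝓝 0) (𝓝 (1 + 0)) :=
          (continuous_const.add continuous_id).tendsto 0
        rw [add_zero] at this
        exact this.mono_left nhdsWithin_le_nhds
      · filter_upwards [self_mem_nhdsWithin] with d hd
        simpa using hd
    have dn : Tendsto (fun s : ℝ => s - 1) (𝓝[>] 1) (𝓝[>] 0) := by
      refine tendsto_nhdsWithin_iff.2 ⟨?_, ?_⟩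
      · have : Tendsto (fun d : ℝ => d - 1) (𝓝 1) (𝓝 (1 - 1)) :=
          (continuous_id.sub continuous_const).tendsto 1
        rw [sub_self] at this
        exact this.mono_left nhdsWithin_le_nhds
      · filter_upwards [self_mem_nhdsWithin] with d hd
        simpa using hd
    constructor
    · intro h
      refine (h.comp up).congr fun d => ?_
      simp
    · intro h
      refine (h.comp dn).congr fun d => ?_
      simp
  rw [h1]
  exact ⟨taub' _ lam hpos hle hw hs C, abel' _ lam hpos hle hw hs C⟩

theorem statement5 (lam : ℕ → ℝ) (hpos : ∀ k, 0 < lam k)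
    (hmono : ∀ m n : ℕ, m ≤ n → lam n ≤ lam m)
    (hsum : ∀ s : ℝ, 1 < s → Summable (fun k => lam k ^ s))
    (a : ℕ → ℝ) (ha0 : ∀ k, 0 ≤ a k) (hbd : ∃ M : ℝ, ∀ k, a k ≤ M) (C : ℝ) :
    Tendsto (fun s : ℝ => (s - 1) * ∑' k : ℕ, a k * lam k ^ s) (𝓝[>] (1 : ℝ)) (𝓝 C) ↔
      Tendsto (fun n : ℕ => (Real.log n)⁻¹ * ∑ k ∈ Finset.range n, a k * lam k)
        atTop (𝓝 C) := by
  obtain ⟨c, hc⟩ : ∃ c, c = (lam 0)⁻¹ := ⟨_, rfl⟩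
  have hc0 : 0 < c := by rw [hc]; exact inv_pos.2 (hpos 0)
  have hr : ∀ (s : ℝ) k, (c * lam k) ^ s = c ^ s * lam k ^ s := fun s k =>
    Real.mul_rpow hc0.le (hpos k).le
  have key := main1 (fun k => c * lam k) (fun k => mul_pos hc0 (hpos k))
    (fun k => by
      rw [hc, inv_mul_le_iff₀ (hpos 0), mul_one]; exact hmono 0 k (Nat.zero_le _))
    (fun m n h => mul_le_mul_of_nonneg_left (hmono m n h) hc0.le)
    (fun s h => by simp only [hr]; exact (hsum s h).mul_left _) a ha0 hbd (c * C)
  have hcs : Tendsto (fun s : ℝ => c ^ s) (𝓝[>] 1) (𝓝 c) := by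
    have : Tendsto (fun s : ℝ => c ^ s) (𝓝 1) (𝓝 (c ^ (1:ℝ))) :=
      (Real.continuousAt_const_rpow hc0.ne').tendsto
    rw [Real.rpow_one] at this
    exact this.mono_left nhdsWithin_le_nhds
  have e1 : ∀ s : ℝ, (s - 1) * ∑' k : ℕ, a k * (c * lam k) ^ s
      = c ^ s * ((s - 1) * ∑' k : ℕ, a k * lam k ^ s) := by
    intro s
    simp only [hr, mul_left_comm (a _) (c ^ s)]
    rw [tsum_mul_left, mul_left_comm]
  have e2 : ∀ n : ℕ, (Real.log n)⁻¹ * ∑ k ∈ Finset.range n, a k * (c * lam k)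
      = c * ((Real.log n)⁻¹ * ∑ k ∈ Finset.range n, a k * lam k) := by
    intro n
    rw [mul_left_comm, Finset.mul_sum _ _ c]
    congr 1
    refine Finset.sum_congr rfl fun k _ => ?_
    ring
  simp only [e1, e2] at key
  constructor
  · intro h
    have := (key.1 (hcs.mul h)).const_mul c⁻¹
    simpa [inv_mul_cancel_left₀ hc0.ne'] using this
  · intro h
    have := (hcs.inv₀ hc0.ne').mul (key.2 (h.const_mul c))
    rw [inv_mul_cancel_left₀ hc0.ne'] at this
    refine this.congr fun s => ?_
    rw [inv_mul_cancel_left₀ (Real.rpow_pos_of_pos hc0 s).ne']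
end
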